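/- Suppose d = d(n) := p(n)·n satisfies (log n)^3 ≪ d ≪ n. Let i = i(n) ∈ ℕ be the largest integer such that c = c(n) := d^i/n ≤ 3·log n, and suppose c − (log d − log log d) → B for some real constant B. Then asymptotically almost surely, for G ∈ G(n,p): ζ(G) ≤ (1 + o(1))·(log d + 2·log log n)·e^c/(e^B + 1), and this bound is asymptotically equal to (log d + 2·log log n)·n/(d^{i−1}·(1 + e^{−B})). -/

import Mathlib

open Filter SimpleGraph Set
open scoped Topology

noncomputable section

/-- The probability, under the Erdős–Rényi binomial random graph `G(n,p)`, of a set `A`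
of graphs on vertex set `Fin n`: each pair of distinct vertices is an edge
independently with probability `p`. -/
noncomputable def gnpProb (n : ℕ) (p : ℝ) (A : Set (SimpleGraph (Fin n))) : ℝ := by
  classical
  exact ∑ G ∈ Finset.univ.filter (fun G : SimpleGraph (Fin n) => G ∈ A),
      p ^ (Nat.card G.edgeSet) * (1 - p) ^ (n.choose 2 - Nat.card G.edgeSet)

/-- A sequence of graph events `A n ⊆ G(n, p n)` holds asymptotically almost surely. -/
def AAS (p : ℕ → ℝ) (A : (n : ℕ) → Set (SimpleGraph (Fin n))) : Prop :=
  Tendsto (fun n : ℕ => gnpProb n (p n) (A n)) atTop (nhds 1)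

/-- The set of vertices at graph distance exactly `j` from `v`. -/
def gSphere {V : Type*} (G : SimpleGraph V) (v : V) (j : ℕ) : Set V :=
  {u | G.edist v u = j}

/-- The set of vertices at graph distance at most `j` from some vertex of `A`. -/
def gBall {V : Type*} (G : SimpleGraph V) (A : Set V) (j : ℕ) : Set V :=
  {u | ∃ v ∈ A, G.edist v u ≤ j}

/-- The result of probing with sensor set `S` while the robber is at `v`: the cops
learn the sensor set together with the distance from each sensor to the robber. -/
noncomputable def probe {V : Type*} (G : SimpleGraph V) (S : Finset V) (v : V) :
    Finset V × (V → ℕ) := by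
  classical
  exact (S, fun s => if s ∈ S then G.dist s v else 0)

/-- A cop strategy: given the list of past probe results, choose the next sensor set. -/
def CopStrategy (V : Type*) : Type _ := List (Finset V × (V → ℕ)) → Finset V

/-- A robber trajectory: at each step the robber either stays or moves along an edge. -/
def IsRobberWalk {V : Type*} (G : SimpleGraph V) (w : ℕ → V) : Prop :=
  ∀ t, w (t + 1) = w t ∨ G.Adj (w t) (w (t + 1))

/-- The history of probe results produced in the first `t` rounds when the cops play
strategy `σ` against the robber walk `w` (round `t+1` probes position `w t`). -/
noncomputable def gameHistory {V : Type*} (G : SimpleGraph V) (σ : CopStrategy V)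
    (w : ℕ → V) : ℕ → List (Finset V × (V → ℕ))
  | 0 => []
  | t + 1 => gameHistory G σ w t ++ [probe G (σ (gameHistory G σ w t)) (w t)]

/-- The cops win the localization game on `G` with `k` sensors: there is a strategy,
probing exactly `k` vertices each round, such that for every robber walk there is a
round in which every robber walk producing the same probe results is at the same
vertex, i.e. the cops can locate the robber. -/
def CopsWin {V : Type*} (G : SimpleGraph V) (k : ℕ) : Prop :=
  ∃ σ : CopStrategy V, (∀ h, (σ h).card = k) ∧
    ∀ w : ℕ → V, IsRobberWalk G w → ∃ t : ℕ,
      ∀ w' : ℕ → V, IsRobberWalk G w' →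
        gameHistory G σ w' (t + 1) = gameHistory G σ w (t + 1) → w' t = w t

/-- The localization number `ζ(G)`: the least number of sensors with which the cops
can win the localization game on `G`. -/
noncomputable def localizationNumber {V : Type*} (G : SimpleGraph V) : ℕ :=
  sInf {k | CopsWin G k}

end

/-!
Up to radius `i - 1` the balls of the random graph a.a.s. grow by a factor close to `d` per step.
Hence two vertices `u` and `w` are told apart by about `d ^ (i - 1)` sensors on the sphere of radius
`i - 1` around `u` and by about `n * exp (-c)` sensors on the sphere of radius `i`, namely those
with no neighbour in the ball of radius `i - 1` around `w`, and by as many with `u` and `w`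
exchanged. Since `d ^ (i - 1) = n * c / d` and `c * exp c / d → exp B`, these are about
`M = 2 * n * exp (-c) * (exp B + 1)` sensors.

If `k` sensors are chosen uniformly at random, the expected number of ordered pairs of distinct
vertices of `A` that they fail to tell apart is at most `|A| ^ 2 * (1 - M / n) ^ k`. Once
`2 * D ^ 2 * (1 - M / n) ^ k < 1`, where `D ∼ d` bounds the sizes of the closed neighbourhoods, some
choice of sensors leaves either one candidate or fewer than `|A| / D`, so that after the robber's
move there are fewer than `|A|` candidates: the cops win.
This needs `k ∼ n * log (2 * D ^ 2) / M ∼ log d * exp c / (exp B + 1)` sensors.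
-/

section Chernoff

open MeasureTheory ProbabilityTheory

lemma exp_neg_le_quadratic {x : ℝ} (hx : 0 ≤ x) : Real.exp (-x) ≤ 1 - x + x ^ 2 / 2 := by
  have lower := Real.quadratic_le_exp_of_nonneg hx
  rw [Real.exp_neg, inv_le_iff_one_le_mul₀ (Real.exp_pos x)]
  nlinarith [sq_nonneg (1 - x), sq_nonneg (x ^ 2)]

lemma ncard_occurring_eq_sum_indicator {Ω ι : Type*} [Fintype ι] (A : ι → Set Ω) :
    (fun ω ↦ ({j | ω ∈ A j}.ncard : ℝ)) = ∑ j, (A j).indicator fun _ ↦ 1 := by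
  classical
  ext ω
  simp [indicator_apply, Set.ncard_eq_toFinset_card']

variable {Ω : Type*} [MeasurableSpace Ω] {μ : Measure Ω}

lemma mgf_indicator_one [IsProbabilityMeasure μ] {s : Set Ω} (hs : MeasurableSet s) (t : ℝ) :
    mgf (s.indicator fun _ ↦ 1) μ t = 1 + μ.real s * (Real.exp t - 1) := by
  have pointwise (ω : Ω) : Real.exp (t * s.indicator (fun _ ↦ 1) ω)
      = 1 + s.indicator (fun _ ↦ Real.exp t - 1) ω := by
    by_cases h : ω ∈ s <;> simp [h]
  simp_rw [mgf, pointwise]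
  rw [integral_add (integrable_const _) ((integrable_const _).indicator hs),
    integral_indicator_const _ hs]
  simp

lemma integrable_exp_mul_ncard_occurring {ι : Type*} [Finite ι] [IsFiniteMeasure μ]
    {A : ι → Set Ω} (hA : ∀ j, MeasurableSet (A j)) (t : ℝ) :
    Integrable (fun ω ↦ Real.exp (t * ({j | ω ∈ A j}.ncard : ℝ))) μ := by
  have := Fintype.ofFinite ι
  refine integrable_exp_mul_of_mem_Icc (a := 0) (b := Nat.card ι) ?_ (.of_forall fun ω ↦ ?_)
  · rw [ncard_occurring_eq_sum_indicator]
    exact Finset.aemeasurable_sum _ fun j _ ↦ (measurable_const.indicator (hA j)).aemeasurable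
  · exact ⟨by positivity, mod_cast ncard_le_card _⟩

variable {ι : Type*} [Fintype ι] {A : ι → Set Ω}

lemma mgf_ncard_occurring_le (hindep : iIndepSet A μ) (hA : ∀ j, MeasurableSet (A j)) (t : ℝ) :
    mgf (fun ω ↦ ({j | ω ∈ A j}.ncard : ℝ)) μ t
      ≤ Real.exp ((∑ j, μ.real (A j)) * (Real.exp t - 1)) := by
  have := hindep.isProbabilityMeasure
  rw [ncard_occurring_eq_sum_indicator,
    hindep.iIndepFun_indicator.mgf_sum fun j ↦ measurable_const.indicator (hA j),
    Finset.sum_mul, Real.exp_sum]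
  refine Finset.prod_le_prod (fun j _ ↦ mgf_nonneg) fun j _ ↦ ?_
  rw [mgf_indicator_one (hA j), add_comm]
  exact Real.add_one_le_exp _

lemma measureReal_ncard_occurring_le (hindep : iIndepSet A μ) (hA : ∀ j, MeasurableSet (A j))
    {M η : ℝ} (hM : 0 ≤ M) (hMA : M ≤ ∑ j, μ.real (A j)) (hη : 0 ≤ η) :
    μ.real {ω | ({j | ω ∈ A j}.ncard : ℝ) ≤ (1 - η) * M} ≤ Real.exp (-(M * η ^ 2 / 2)) := by
  have := hindep.isProbabilityMeasure
  refine (measure_le_le_exp_mul_mgf _ (neg_nonpos.2 hη)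
    (integrable_exp_mul_ncard_occurring hA _)).trans ?_
  grw [mgf_ncard_occurring_le hindep hA, ← Real.exp_add]
  gcongr
  have quadratic := exp_neg_le_quadratic hη
  have nonpos : Real.exp (-η) - 1 ≤ 0 := by simpa using hη
  nlinarith [mul_le_mul_of_nonpos_right hMA nonpos]

lemma measureReal_le_ncard_occurring (hindep : iIndepSet A μ) (hA : ∀ j, MeasurableSet (A j))
    {M η : ℝ} (hM : 0 ≤ M) (hMA : ∑ j, μ.real (A j) ≤ M) (hη : 0 ≤ η) (hη2 : η ≤ 2) :
    μ.real {ω | (1 + η) * M ≤ ({j | ω ∈ A j}.ncard : ℝ)} ≤ Real.exp (-(M * η ^ 2 / 4)) := by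
  have := hindep.isProbabilityMeasure
  refine (measure_ge_le_exp_mul_mgf _ (by positivity : 0 ≤ η / 2)
    (integrable_exp_mul_ncard_occurring hA _)).trans ?_
  grw [mgf_ncard_occurring_le hindep hA, ← Real.exp_add]
  gcongr
  have quadratic : Real.exp (η / 2) - 1 - η / 2 ≤ (η / 2) ^ 2 :=
    (abs_le.1 (Real.abs_exp_sub_one_sub_id_le (abs_le.2 ⟨by linarith, by linarith⟩))).2
  have nonneg : 0 ≤ Real.exp (η / 2) - 1 :=
    sub_nonneg.2 (Real.one_le_exp (by positivity))
  nlinarith [mul_le_mul_of_nonneg_right hMA nonneg]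

end Chernoff

section RandomGraph

open MeasureTheory ProbabilityTheory unitInterval

instance {V : Type*} [Finite V] : DiscreteMeasurableSpace (SimpleGraph V) :=
  have : MeasurableSingletonClass (SimpleGraph V) :=
    ⟨fun G ↦ by
      rw [← edgeSet_injective.preimage_image {G}, image_singleton]
      exact measurable_edgeSet (MeasurableSet.singleton G.edgeSet)⟩
  inferInstance

lemma gnpProb_eq_binomialRandom_real (n : ℕ) (p : I) (A : Set (SimpleGraph (Fin n))) :
    gnpProb n p A = G(Fin n, p).real A := by
  classical
  rw [gnpProb, ← A.toFinite.coe_toFinset, ← sum_measureReal_singleton]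
  refine Finset.sum_congr (by ext; simp) fun G _ ↦ ?_
  rw [measureReal_def, binomialRandom_singleton, Nat.card_coe_set_eq]
  simp

variable {V : Type*}

/-- The event `A` depends only on which of the pairs in `F` are edges. -/
def DeterminedBy (F : Set (Sym2 V)) (A : Set (SimpleGraph V)) : Prop :=
  ∀ ⦃G H : SimpleGraph V⦄, F ∩ G.edgeSet = F ∩ H.edgeSet → G ∈ A → H ∈ A

lemma DeterminedBy.eq_preimage {F : Finset (Sym2 V)} {A : Set (SimpleGraph V)}
    (hA : DeterminedBy F A) :
    ∃ T : Set (F → Prop), A = (fun G (e : F) ↦ e.1 ∈ G.edgeSet) ⁻¹' T := by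
  refine ⟨(fun G (e : F) ↦ e.1 ∈ G.edgeSet) '' A, (subset_preimage_image _ _).antisymm ?_⟩
  rintro H ⟨G, hG, hGH⟩
  refine hA ?_ hG
  ext e
  exact and_congr_right fun he ↦ (congrFun hGH ⟨e, he⟩).to_iff

lemma DeterminedBy.mono {F F' : Set (Sym2 V)} {A : Set (SimpleGraph V)}
    (hA : DeterminedBy F A) (hF : F ⊆ F') : DeterminedBy F' A := fun G H hGH ↦
  hA <| by rw [← inter_eq_self_of_subset_left hF, inter_assoc, hGH, inter_assoc]

lemma determinedBy_adj (s y : V) : DeterminedBy {s(s, y)} {G : SimpleGraph V | G.Adj s y} :=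
  fun G H hGH hG ↦ by
    have : s(s, y) ∈ {s(s, y)} ∩ H.edgeSet := hGH ▸ ⟨rfl, hG⟩
    exact this.2

lemma DeterminedBy.compl {F : Set (Sym2 V)} {A : Set (SimpleGraph V)} (hA : DeterminedBy F A) :
    DeterminedBy F Aᶜ :=
  fun _ _ hGH hG hH ↦ hG (hA hGH.symm hH)

/-- The event that the vertex `s` has a neighbour in `Q` but none in `P`. -/
def attachedEvent (P Q : Set V) (s : V) : Set (SimpleGraph V) :=
  {G | (∃ y ∈ Q, G.Adj s y) ∧ ∀ y ∈ P, ¬ G.Adj s y}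

/-- The pairs of vertices joining `s` to `Y`. -/
def edgeStar (s : V) (Y : Set V) : Set (Sym2 V) :=
  (fun y ↦ s(s, y)) '' Y

lemma determinedBy_forall_not_adj (s : V) (Y : Set V) :
    DeterminedBy (edgeStar s Y) {G : SimpleGraph V | ∀ y ∈ Y, ¬ G.Adj s y} :=
  fun _ _ hGH hG y hy ↦ (determinedBy_adj s y).compl.mono
    (singleton_subset_iff.2 (mem_image_of_mem _ hy)) hGH (hG y hy)

lemma determinedBy_attachedEvent (P Q : Set V) (s : V) :
    DeterminedBy (edgeStar s (P ∪ Q)) (attachedEvent P Q s) := fun G H hGH ⟨hQ, hP⟩ ↦ by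
  refine ⟨?_, (determinedBy_forall_not_adj s P).mono (image_mono subset_union_left) hGH hP⟩
  by_contra! hQ'
  obtain ⟨y, hy, hsy⟩ := hQ
  exact (determinedBy_forall_not_adj s Q).mono (image_mono subset_union_right) hGH.symm hQ' y hy hsy

variable [Finite V]

lemma binomialRandom_eq_map_infinitePi (p : I) :
    G(V, p) = (Measure.infinitePi fun e : Sym2 V ↦
      toNNReal p • .dirac (e ∈ Sym2.diagSetᶜ) + toNNReal (σ p) • .dirac False).map
        fun x ↦ fromEdgeSet {e | x e} := by
  rw [binomialRandom_eq_map, setBernoulli_eq_map, Measure.map_map (by fun_prop) .of_discrete]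
  rfl

lemma iIndepFun_mem_edgeSet (p : I) :
    iIndepFun (fun (e : Sym2 V) (G : SimpleGraph V) ↦ e ∈ G.edgeSet) G(V, p) := by
  let ν (e : Sym2 V) : Measure Prop :=
    toNNReal p • .dirac (e ∈ Sym2.diagSetᶜ) + toNNReal (σ p) • .dirac False
  have indep : iIndepFun (fun (e : Sym2 V) x ↦ x e ∧ e ∉ Sym2.diagSet) (Measure.infinitePi ν) :=
    iIndepFun_infinitePi (X := fun e x ↦ x ∧ e ∉ Sym2.diagSet) fun _ ↦ .of_discrete
  rw [iIndepFun_iff_map_fun_eq_infinitePi_map fun _ ↦ .of_discrete] at indep ⊢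
  simp_rw [binomialRandom_eq_map_infinitePi p,
    Measure.map_map (measurable_of_countable _) (measurable_of_countable _)]
  simpa [ν, Function.comp_def] using indep

lemma binomialRandom_real_adj (p : I) {a b : V} (hab : a ≠ b) :
    G(V, p).real {G | G.Adj a b} = p := by
  let ν (e : Sym2 V) : Measure Prop :=
    toNNReal p • .dirac (e ∈ Sym2.diagSetᶜ) + toNNReal (σ p) • .dirac False
  have marginal : G(V, p) {G | G.Adj a b} = ν s(a, b) {q | q} := by
    rw [← Measure.infinitePi_map_eval ν s(a, b), binomialRandom_eq_map_infinitePi,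
      Measure.map_apply (measurable_of_countable _) .of_discrete,
      Measure.map_apply (measurable_of_countable _) .of_discrete]
    congr! 1
    ext x
    simp [hab]
  simp [measureReal_def, marginal, ν, hab]

lemma indepSet_of_determinedBy (p : I) {F₁ F₂ : Set (Sym2 V)} {A B : Set (SimpleGraph V)}
    (hA : DeterminedBy F₁ A) (hB : DeterminedBy F₂ B) (hF : Disjoint F₁ F₂) :
    IndepSet A B G(V, p) := by
  classical
  lift F₁ to Finset (Sym2 V) using F₁.toFinite
  lift F₂ to Finset (Sym2 V) using F₂.toFinite
  obtain ⟨S, rfl⟩ := hA.eq_preimage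
  obtain ⟨T, rfl⟩ := hB.eq_preimage
  have indep := (iIndepFun_mem_edgeSet p).indepFun_finset F₁ F₂ (Finset.disjoint_coe.1 hF)
    fun _ ↦ .of_discrete
  exact (indepFun_iff_indepSet_preimage .of_discrete .of_discrete).1 indep S T
    S.toFinite.measurableSet T.toFinite.measurableSet

lemma iIndepSet_of_determinedBy {ι : Type*} (p : I) {F : ι → Set (Sym2 V)}
    {A : ι → Set (SimpleGraph V)} (hA : ∀ j, DeterminedBy (F j) (A j))
    (hF : Pairwise fun j k ↦ Disjoint (F j) (F k)) : iIndepSet A G(V, p) := by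
  classical
  refine (iIndepSet_iff_meas_biInter fun _ ↦ .of_discrete).2 fun s ↦ ?_
  induction s using Finset.induction_on with
  | empty => simp
  | insert j s hj ih =>
    have inter_determinedBy : DeterminedBy (⋃ k ∈ s, F k) (⋂ k ∈ s, A k) := fun G H hGH hG ↦
      mem_iInter₂.2 fun k hk ↦
        (hA k).mono (subset_biUnion_of_mem (u := F) hk) hGH (mem_iInter₂.1 hG k hk)
    have disj : Disjoint (F j) (⋃ k ∈ s, F k) :=
      disjoint_iUnion₂_right.2 fun k hk ↦ hF (ne_of_mem_of_not_mem hk hj).symm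
    rw [Finset.set_biInter_insert, Finset.prod_insert hj, ← ih]
    exact (indepSet_of_determinedBy p (hA j) inter_determinedBy disj).measure_inter_eq_mul

lemma binomialRandom_real_forall_not_adj (p : I) {s : V} {Y : Set V} (hs : s ∉ Y) :
    G(V, p).real {G | ∀ y ∈ Y, ¬ G.Adj s y} = (1 - p : ℝ) ^ Y.ncard := by
  classical
  lift Y to Finset V using Y.toFinite
  have indep : iIndepSet (fun y ↦ {G : SimpleGraph V | G.Adj s y}ᶜ) G(V, p) :=
    iIndepSet_of_determinedBy p (fun y ↦ (determinedBy_adj s y).compl)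
      fun y z hyz ↦ disjoint_singleton.2 (mt Sym2.congr_right.1 hyz)
  have prob (y) (hy : y ∈ Y) : G(V, p).real {G | G.Adj s y}ᶜ = 1 - p := by
    rw [probReal_compl_eq_one_sub .of_discrete,
      binomialRandom_real_adj p (ne_of_mem_of_not_mem hy hs).symm]
  have inter : {G : SimpleGraph V | ∀ y ∈ (Y : Set V), ¬ G.Adj s y}
      = ⋂ y ∈ Y, {G | G.Adj s y}ᶜ := by
    ext G
    simp
  rw [inter, measureReal_def, indep.meas_biInter Y, ENNReal.toReal_prod]
  simp_rw [← measureReal_def]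
  rw [Finset.prod_congr rfl prob, Finset.prod_const, ncard_coe_finset]

lemma binomialRandom_real_attachedEvent (p : I) {P Q : Set V} (hPQ : Disjoint P Q) {s : V}
    (hP : s ∉ P) (hQ : s ∉ Q) :
    G(V, p).real (attachedEvent P Q s)
      = (1 - (1 - p : ℝ) ^ Q.ncard) * (1 - p : ℝ) ^ P.ncard := by
  have indep := indepSet_of_determinedBy p (determinedBy_forall_not_adj s Q).compl
    (determinedBy_forall_not_adj s P) <|
    (disjoint_image_iff fun _ _ ↦ Sym2.congr_right.1).2 hPQ.symm
  have inter : attachedEvent P Q s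
      = {G | ∀ y ∈ Q, ¬ G.Adj s y}ᶜ ∩ {G | ∀ y ∈ P, ¬ G.Adj s y} := by
    ext G
    simp [attachedEvent]
  rw [inter, measureReal_def, indep.measure_inter_eq_mul, ENNReal.toReal_mul, ← measureReal_def,
    ← measureReal_def, probReal_compl_eq_one_sub .of_discrete,
    binomialRandom_real_forall_not_adj p hQ, binomialRandom_real_forall_not_adj p hP]

lemma iIndepSet_attachedEvent (p : I) {P Q T : Set V} (hT : Disjoint T (P ∪ Q)) :
    iIndepSet (fun s : T ↦ attachedEvent P Q s) G(V, p) := by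
  refine iIndepSet_of_determinedBy p (fun s ↦ determinedBy_attachedEvent P Q s) ?_
  intro s t hst
  refine disjoint_left.2 ?_
  rintro _ ⟨y, hy, rfl⟩ ⟨z, -, hyz⟩
  rcases Sym2.eq_iff.1 hyz with ⟨h, -⟩ | ⟨h, -⟩
  · exact hst (Subtype.ext h.symm)
  · exact disjoint_left.1 hT t.2 (h ▸ hy)

lemma binomialRandom_real_ncard_attached_le (p : I) {P Q T : Set V} (hPQ : Disjoint P Q)
    (hT : Disjoint T (P ∪ Q)) {N q η : ℝ} (hN : N ≤ T.ncard) (hq : 0 ≤ q)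
    (hqPQ : q ≤ (1 - (1 - p : ℝ) ^ Q.ncard) * (1 - p : ℝ) ^ P.ncard) (hN0 : 0 ≤ N) (hη : 0 ≤ η) :
    G(V, p).real {G | ({s ∈ T | G ∈ attachedEvent P Q s}.ncard : ℝ) ≤ (1 - η) * (N * q)}
      ≤ Real.exp (-(N * q * η ^ 2 / 2)) := by
  classical
  have := Fintype.ofFinite V
  have prob (s : T) : q ≤ G(V, p).real (attachedEvent P Q s) := by
    rwa [binomialRandom_real_attachedEvent p hPQ]
    exacts [fun h ↦ disjoint_left.1 hT s.2 (.inl h), fun h ↦ disjoint_left.1 hT s.2 (.inr h)]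
  have mean : N * q ≤ ∑ s : T, G(V, p).real (attachedEvent P Q s) := calc
    N * q ≤ ∑ _s : T, q := by
      rw [Finset.sum_const, Finset.card_univ, ← Nat.card_eq_fintype_card, Nat.card_coe_set_eq,
        nsmul_eq_mul]
      gcongr
    _ ≤ _ := Finset.sum_le_sum fun s _ ↦ prob s
  convert measureReal_ncard_occurring_le (iIndepSet_attachedEvent p hT) (fun _ ↦ .of_discrete)
    (mul_nonneg hN0 hq) mean hη using 6 with G
  rw [← ncard_image_of_injective _ Subtype.val_injective]
  congr 1
  ext s
  simp [and_comm]

end RandomGraph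

section Conditioning

open MeasureTheory

lemma measureReal_le_of_forall_fiber {Ω β : Type*} [Finite Ω] [MeasurableSpace Ω]
    [DiscreteMeasurableSpace Ω] (μ : Measure Ω) [IsProbabilityMeasure μ] (X : Ω → β) {A : Set Ω}
    {e : ℝ} (he : 0 ≤ e)
    (hA : ∀ ω₀ ∈ A, μ.real (X ⁻¹' {X ω₀} ∩ A) ≤ μ.real (X ⁻¹' {X ω₀}) * e) : μ.real A ≤ e := by
  classical
  have := Fintype.ofFinite Ω
  have disj (B : Set Ω) :
      (Finset.univ.image X : Set β).PairwiseDisjoint fun x ↦ X ⁻¹' {x} ∩ B := fun x _ y _ hxy ↦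
    ((disjoint_singleton.2 hxy).preimage X).mono inter_subset_left inter_subset_left
  have total (B : Set Ω) : μ.real B = ∑ x ∈ Finset.univ.image X, μ.real (X ⁻¹' {x} ∩ B) := by
    rw [← measureReal_biUnion_finset (disj B) fun _ _ ↦ .of_discrete]
    congr 1
    ext ω
    simp
  have fiber (x : β) : μ.real (X ⁻¹' {x} ∩ A) ≤ μ.real (X ⁻¹' {x}) * e := by
    rcases (X ⁻¹' {x} ∩ A).eq_empty_or_nonempty with h | ⟨ω₀, rfl, hω₀⟩
    · rw [h, measureReal_empty]
      positivity
    · exact hA ω₀ hω₀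
  calc μ.real A ≤ ∑ x ∈ Finset.univ.image X, μ.real (X ⁻¹' {x} ∩ univ) * e :=
        (total A).trans_le (Finset.sum_le_sum fun x _ ↦ by rw [inter_univ]; exact fiber x)
    _ = e := by rw [← Finset.sum_mul, ← total, probReal_univ, one_mul]

end Conditioning

section Balls

variable {V : Type*} {G H : SimpleGraph V} {A : Set V}

lemma gBall_zero (G : SimpleGraph V) (A : Set V) : gBall G A 0 = A := by
  ext u
  simp [gBall]

lemma subset_gBall (G : SimpleGraph V) (A : Set V) (j : ℕ) : A ⊆ gBall G A j :=
  fun a ha ↦ ⟨a, ha, by simp⟩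

lemma mem_gBall_one {u : V} : u ∈ gBall G A 1 ↔ u ∈ A ∨ ∃ a ∈ A, G.Adj a u := by
  simp only [gBall, Nat.cast_one, edist_le_one_iff_adj_or_eq]
  grind

lemma gBall_mono_radius (G : SimpleGraph V) (A : Set V) : Monotone (gBall G A) :=
  fun _ _ hij _ ⟨a, ha, h⟩ ↦ ⟨a, ha, h.trans (mod_cast hij)⟩

lemma gBall_union (G : SimpleGraph V) (A A' : Set V) (j : ℕ) :
    gBall G (A ∪ A') j = gBall G A j ∪ gBall G A' j := by
  ext u
  simp [gBall, or_and_right, exists_or]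

lemma gBall_succ (G : SimpleGraph V) (A : Set V) (j : ℕ) :
    gBall G A (j + 1) = gBall G (gBall G A j) 1 := by
  ext u
  constructor
  · rintro ⟨a, ha, hau⟩
    rcases hau.lt_or_eq with hlt | heq
    · exact subset_gBall G _ 1 ⟨a, ha, ENat.lt_natCast_add_one_iff.1 hlt⟩
    · obtain ⟨path, hpath⟩ := exists_walk_of_edist_eq_coe (edist_comm.trans heq)
      cases path with
      | nil => simp at hpath
      | cons hux path =>
        rw [Walk.length_cons, add_left_inj] at hpath
        exact mem_gBall_one.2 (.inr ⟨_, ⟨a, ha, edist_comm.trans_le (hpath ▸ edist_le path)⟩,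
          hux.symm⟩)
  · rintro ⟨x, ⟨a, ha, hax⟩, hxu⟩
    exact ⟨a, ha, SimpleGraph.edist_triangle.trans (by push_cast; gcongr; exact mod_cast hxu)⟩

/-- The pairs of vertices with at least one endpoint in `C`. -/
def incidentPairs (C : Set V) : Set (Sym2 V) :=
  {e | ∃ v ∈ C, v ∈ e}

lemma gBall_congr {C : Set V} {m : ℕ} (hC : gBall G A m ⊆ C)
    (hGH : incidentPairs C ∩ G.edgeSet = incidentPairs C ∩ H.edgeSet) {j : ℕ} (hj : j ≤ m + 1) :
    gBall H A j = gBall G A j := by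
  induction j with
  | zero => simp only [gBall_zero]
  | succ j ih =>
    rw [gBall_succ H, gBall_succ G, ih (by lia)]
    ext u
    simp only [mem_gBall_one]
    refine or_congr_right (exists_congr fun a ↦ and_congr_right fun ha ↦ ?_)
    have incident : s(a, u) ∈ incidentPairs C :=
      ⟨a, hC (gBall_mono_radius G A (by lia) ha), Sym2.mem_mk_left a u⟩
    simpa only [mem_inter_iff, incident, true_and, mem_edgeSet, eq_iff_iff, iff_comm] using
      congrArg (s(a, u) ∈ ·) hGH

/-- The vertices at distance exactly `j` from `w` and more than `j` from `u`. For `j ≠ 0`, a sensor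
placed at such a vertex distinguishes `u` from `w`. -/
def separatingSphere (G : SimpleGraph V) (u w : V) (j : ℕ) : Set V :=
  gSphere G w j \ gBall G {u} j

lemma mem_separatingSphere {u w s : V} {j : ℕ} :
    s ∈ separatingSphere G u w j ↔ G.edist w s = j ∧ j < G.edist u s := by
  simp [separatingSphere, gSphere, gBall]

lemma dist_ne_of_mem_separatingSphere {u w s : V} {j : ℕ} (hj : j ≠ 0)
    (hs : s ∈ separatingSphere G u w j) : G.dist s u ≠ G.dist s w := by
  obtain ⟨hw, hu⟩ := mem_separatingSphere.1 hs
  intro heq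
  have dist_u : G.dist u s = j := by
    rw [dist_comm, heq, dist_comm, SimpleGraph.dist, hw, ENat.toNat_natCast]
  have reachable : G.Reachable u s := .of_dist_ne_zero (dist_u.trans_ne hj)
  exact hu.ne (by rw [← reachable.coe_dist_eq_edist, dist_u])

/-- Every nonempty set of at most `r` vertices has a closed neighbourhood at least `s` times as
large. -/
def SmallSetExpansion (G : SimpleGraph V) (s r : ℝ) : Prop :=
  ∀ A : Set V, A.Nonempty → A.ncard ≤ r → s * A.ncard ≤ (gBall G A 1).ncard

variable [Finite V]

lemma sum_ncard_separatingSphere_le (G : SimpleGraph V) (u w : V) {j j' : ℕ} (hj : j ≠ 0)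
    (hj' : j' ≠ 0) (hjj' : j ≠ j') :
    (separatingSphere G u w j).ncard + (separatingSphere G u w j').ncard
      + ((separatingSphere G w u j).ncard + (separatingSphere G w u j').ncard)
      ≤ {s | G.dist s u ≠ G.dist s w}.ncard := by
  have disj_radii (u w : V) : Disjoint (separatingSphere G u w j) (separatingSphere G u w j') :=
    disjoint_left.2 fun s hs hs' ↦ hjj' <| by
      rw [mem_separatingSphere] at hs hs'
      exact mod_cast hs.1.symm.trans hs'.1
  have disj_swap (i i' : ℕ) : Disjoint (separatingSphere G u w i) (separatingSphere G w u i') :=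
    disjoint_left.2 fun s hs hs' ↦ by
      rw [mem_separatingSphere] at hs hs'
      exact lt_asymm (hs.2.trans_eq hs'.1) (hs'.2.trans_eq hs.1)
  rw [← ncard_union_eq (disj_radii u w), ← ncard_union_eq (disj_radii w u), ← ncard_union_eq]
  · refine ncard_le_ncard ?_
    rintro s ((hs | hs) | hs | hs)
    exacts [dist_ne_of_mem_separatingSphere hj hs, dist_ne_of_mem_separatingSphere hj' hs,
      (dist_ne_of_mem_separatingSphere hj hs).symm, (dist_ne_of_mem_separatingSphere hj' hs).symm]
  · simp only [disjoint_union_left, disjoint_union_right, disj_swap, and_self]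

lemma ncard_gBall_one_le {L : ℝ} (hL : ∀ v, ((gBall G {v} 1).ncard : ℝ) ≤ L) (A : Set V) :
    ((gBall G A 1).ncard : ℝ) ≤ L * A.ncard := by
  induction A, A.toFinite using Set.Finite.induction_on with
  | empty => simp [gBall]
  | @insert a A ha _ ih =>
    rw [insert_eq, gBall_union, ← insert_eq, ncard_insert_of_notMem ha]
    calc ((gBall G {a} 1 ∪ gBall G A 1).ncard : ℝ)
        ≤ (gBall G {a} 1).ncard + (gBall G A 1).ncard := mod_cast ncard_union_le _ _
      _ ≤ L * (A.ncard + 1 : ℕ) := by push_cast; linarith [hL a]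

lemma ncard_gBall_le {L : ℝ} (hL : ∀ v, ((gBall G {v} 1).ncard : ℝ) ≤ L) (hL0 : 0 ≤ L)
    (A : Set V) (j : ℕ) : ((gBall G A j).ncard : ℝ) ≤ L ^ j * A.ncard := by
  induction j with
  | zero => simp [gBall_zero]
  | succ j ih =>
    rw [gBall_succ, pow_succ', mul_assoc]
    exact (ncard_gBall_one_le hL _).trans (by gcongr)

lemma mul_pow_le_ncard_gBall {L s : ℝ} (hL : ∀ v, ((gBall G {v} 1).ncard : ℝ) ≤ L) (hL1 : 1 ≤ L)
    (hs0 : 0 ≤ s) {A : Set V} (hA : A.Nonempty) {m : ℕ}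
    (hs : SmallSetExpansion G s (L ^ m * A.ncard)) {j : ℕ} (hj : j ≤ m + 1) :
    s ^ j * A.ncard ≤ (gBall G A j).ncard := by
  induction j with
  | zero => simp [gBall_zero]
  | succ j ih =>
    have small : ((gBall G A j).ncard : ℝ) ≤ L ^ m * A.ncard := by
      refine (ncard_gBall_le hL (by linarith) A j).trans ?_
      gcongr
      lia
    rw [gBall_succ, pow_succ', mul_assoc]
    refine le_trans ?_ (hs _ (hA.mono (subset_gBall G A j)) small)
    gcongr
    exact ih (by lia)

lemma ncard_gBall_pair_le (G : SimpleGraph V) (u w : V) (m : ℕ) :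
    (gBall G {u, w} (m + 1)).ncard ≤ (gBall G {u} (m + 1)).ncard + (gBall G {w} m).ncard
      + (separatingSphere G u w (m + 1)).ncard := by
  have cover : gBall G {u, w} (m + 1)
      ⊆ gBall G {u} (m + 1) ∪ gBall G {w} m ∪ separatingSphere G u w (m + 1) := by
    rintro s ⟨v, rfl | rfl, hs⟩
    · exact .inl (.inl ⟨v, rfl, hs⟩)
    rcases hs.lt_or_eq with hlt | heq
    · exact .inl (.inr ⟨v, rfl, ENat.lt_natCast_add_one_iff.1 hlt⟩)
    by_cases hu : s ∈ gBall G {u} (m + 1)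
    exacts [.inl (.inl hu), .inr ⟨heq, hu⟩]
  grw [ncard_le_ncard cover, ncard_union_le, ncard_union_le]

lemma le_ncard_separatingSphere {L s : ℝ} (hL : ∀ v, ((gBall G {v} 1).ncard : ℝ) ≤ L)
    (hL1 : 1 ≤ L) (hs0 : 0 ≤ s) {m : ℕ}
    (hs : SmallSetExpansion G s (2 * L ^ m)) {u w : V} (huw : u ≠ w) :
    2 * s ^ (m + 1) - L ^ (m + 1) - L ^ m ≤ (separatingSphere G u w (m + 1)).ncard := by
  have pair : ({u, w} : Set V).ncard = 2 := ncard_pair huw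
  have lower := mul_pow_le_ncard_gBall (j := m + 1) (A := {u, w}) hL hL1 hs0 (insert_nonempty u {w})
    (by simpa only [pair, Nat.cast_ofNat, mul_comm] using hs) le_rfl
  have split : ((gBall G {u, w} (m + 1)).ncard : ℝ) ≤ (gBall G {u} (m + 1)).ncard
      + (gBall G {w} m).ncard + (separatingSphere G u w (m + 1)).ncard :=
    mod_cast ncard_gBall_pair_le G u w m
  have upper_u := ncard_gBall_le hL (by linarith) {u} (m + 1)
  have upper_w := ncard_gBall_le hL (by linarith) {w} m
  rw [pair] at lower
  rw [ncard_singleton, Nat.cast_one, mul_one] at upper_u upper_w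
  push_cast at lower
  linarith

end Balls

section Expansion

open MeasureTheory ProbabilityTheory unitInterval

variable {V : Type*} [Finite V]

lemma binomialRandom_real_lt_ncard_gBall_one (p : I) (v : V) {d η : ℝ}
    (hd : (p * Nat.card V : ℝ) ≤ d) (hη0 : 0 ≤ η) (hη : η ≤ 2) (hηd : 1 ≤ η * d) :
    G(V, p).real {G | (1 + 2 * η) * d < (gBall G {v} 1).ncard}
      ≤ Real.exp (-(d * η ^ 2 / 4)) := by
  classical
  have := Fintype.ofFinite V
  have indep : iIndepSet (fun w ↦ {G : SimpleGraph V | G.Adj v w}) G(V, p) :=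
    iIndepSet_of_determinedBy p (determinedBy_adj v)
      fun w x hwx ↦ disjoint_singleton.2 (mt Sym2.congr_right.1 hwx)
  have mean : ∑ w, G(V, p).real {G | G.Adj v w} ≤ d := by
    refine le_trans ?_ hd
    rw [Nat.card_eq_fintype_card, mul_comm, ← nsmul_eq_mul, ← Finset.card_univ,
      ← Finset.sum_const]
    refine Finset.sum_le_sum fun w _ ↦ ?_
    rcases eq_or_ne v w with rfl | hvw
    · simpa using p.2.1
    · rw [binomialRandom_real_adj p hvw]
  have hd0 : 0 ≤ d := (mul_nonneg p.2.1 (Nat.cast_nonneg _)).trans hd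
  refine le_trans (measureReal_mono fun G hG ↦ ?_)
    (measureReal_le_ncard_occurring indep (fun _ ↦ .of_discrete) hd0 mean hη0 hη)
  have ball : (gBall G {v} 1).ncard ≤ {w | G.Adj v w}.ncard + 1 := by
    refine (ncard_le_ncard fun w hw ↦ ?_).trans (ncard_insert_le v {w | G.Adj v w})
    simpa [mem_gBall_one, eq_comm] using hw
  have : ((gBall G {v} 1).ncard : ℝ) ≤ {w | G.Adj v w}.ncard + 1 := mod_cast ball
  simp only [mem_ofPred_eq] at hG ⊢
  linarith

lemma le_one_sub_one_sub_pow {x η : ℝ} (hx0 : 0 ≤ x) (hx : x ≤ 1) {a : ℕ} (ha : x * a ≤ η / 2) :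
    (1 - η / 4) * (x * a) ≤ 1 - (1 - x) ^ a := by
  have pow_le : (1 - x) ^ a ≤ Real.exp (-(x * a)) := by
    rw [mul_comm, ← mul_neg, Real.exp_nat_mul]
    exact pow_le_pow_left₀ (sub_nonneg.2 hx) (Real.one_sub_le_exp_neg _) _
  have quadratic := exp_neg_le_quadratic (by positivity : 0 ≤ x * a)
  have : (x * a) ^ 2 ≤ η / 2 * (x * a) := by rw [sq]; gcongr
  linarith

lemma binomialRandom_real_ncard_gBall_one_lt (p : I) {A : Set V} {d η : ℝ}
    (hd : d = p * Nat.card V) (hd1 : 1 ≤ d) (hη0 : 0 ≤ η) (hη : η ≤ 1 / 2)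
    (hA : (p * A.ncard : ℝ) ≤ η / 2) :
    G(V, p).real {G | ((gBall G A 1).ncard : ℝ) < (1 - 2 * η) * d * A.ncard}
      ≤ Real.exp (-(d * η ^ 2 / 4)) ^ A.ncard := by
  set q : ℝ := 1 - (1 - p : ℝ) ^ A.ncard
  obtain ⟨hp0, hp1⟩ := p.2
  have hq : (1 - η / 4) * (p * A.ncard) ≤ q := le_one_sub_one_sub_pow hp0 hp1 hA
  have hq0 : 0 ≤ q := hq.trans' (mul_nonneg (by linarith) (by positivity))
  have outside : (1 - η / 2) * Nat.card V ≤ (Aᶜ.ncard : ℝ) := by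
    have compl : (A.ncard + Aᶜ.ncard : ℝ) = Nat.card V := mod_cast ncard_add_ncard_compl A
    have : (A.ncard : ℝ) ≤ A.ncard * d := le_mul_of_one_le_right (by positivity) hd1
    have : (A.ncard : ℝ) * d ≤ η / 2 * Nat.card V := by
      rw [hd, ← mul_assoc, mul_comm (A.ncard : ℝ)]
      gcongr
    linarith
  have mean : (1 - η) * (d * A.ncard) ≤ Aᶜ.ncard * q := calc
    (1 - η) * (d * A.ncard) ≤ (1 - η / 2) * (1 - η / 4) * (d * A.ncard) := by
      gcongr
      linarith [sq_nonneg η]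
    _ = ((1 - η / 2) * Nat.card V) * ((1 - η / 4) * (p * A.ncard)) := by rw [hd]; ring
    _ ≤ Aᶜ.ncard * q := by gcongr; exact mul_nonneg (by linarith) (by positivity)
  have tail := binomialRandom_real_ncard_attached_le p (disjoint_empty A).symm
    (by rw [empty_union]; exact disjoint_compl_left) le_rfl hq0 (by simp [q])
    (Nat.cast_nonneg _) hη0
  refine le_trans (measureReal_mono fun G hG ↦ ?_) (tail.trans ?_)
  · simp only [mem_ofPred_eq] at hG ⊢
    have attached : {s ∈ Aᶜ | G ∈ attachedEvent ∅ A s} ⊆ gBall G A 1 := fun s ⟨_, ⟨y, hy, hsy⟩, _⟩ ↦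
      mem_gBall_one.2 (.inr ⟨y, hy, hsy.symm⟩)
    have : ({s ∈ Aᶜ | G ∈ attachedEvent ∅ A s}.ncard : ℝ) ≤ (gBall G A 1).ncard :=
      mod_cast ncard_le_ncard attached
    calc ({s ∈ Aᶜ | G ∈ attachedEvent ∅ A s}.ncard : ℝ)
        ≤ (1 - 2 * η) * (d * A.ncard) := by linarith
      _ ≤ (1 - η) * ((1 - η) * (d * A.ncard)) := by
        nlinarith [mul_nonneg (sq_nonneg η) (by positivity : 0 ≤ d * A.ncard)]
      _ ≤ (1 - η) * (Aᶜ.ncard * q) := by gcongr; linarith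
  · rw [← Real.exp_nat_mul]
    gcongr
    nlinarith [mul_le_mul_of_nonneg_right mean (sq_nonneg η),
      mul_nonneg (mul_nonneg (by linarith : 0 ≤ 1 / 2 - η) (by positivity : 0 ≤ d * A.ncard))
        (sq_nonneg η)]

lemma binomialRandom_real_not_smallSetExpansion (p : I) {d η r : ℝ} (hd : d = p * Nat.card V)
    (hd1 : 1 ≤ d) (hη0 : 0 ≤ η) (hη : η ≤ 1 / 2) (hr : p * r ≤ η / 2) :
    G(V, p).real {G | ¬ SmallSetExpansion G ((1 - 2 * η) * d) r}
      ≤ (1 + Real.exp (-(d * η ^ 2 / 4))) ^ Nat.card V - 1 := by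
  classical
  have := Fintype.ofFinite V
  set x := Real.exp (-(d * η ^ 2 / 4))
  let small : Finset (Finset V) := {A ∈ Finset.univ.erase ∅ | (A.card : ℝ) ≤ r}
  have cover : {G : SimpleGraph V | ¬ SmallSetExpansion G ((1 - 2 * η) * d) r}
      ⊆ ⋃ A ∈ small, {G | ((gBall G A 1).ncard : ℝ) < (1 - 2 * η) * d * A.card} := by
    intro G hG
    simp only [SmallSetExpansion, mem_ofPred_eq] at hG
    push Not at hG
    obtain ⟨A, hA, hAr, hG⟩ := hG
    lift A to Finset V using A.toFinite
    rw [ncard_coe_finset] at hAr hG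
    exact mem_biUnion (x := A) (by simpa [small, hAr, Finset.nonempty_iff_ne_empty] using hA) hG
  calc G(V, p).real {G | ¬ SmallSetExpansion G ((1 - 2 * η) * d) r}
      ≤ ∑ A ∈ small, x ^ A.card := by
        refine (measureReal_mono cover (measure_ne_top _ _)).trans
          ((measureReal_biUnion_finset_le _ _).trans ?_)
        refine Finset.sum_le_sum fun A hA ↦ ?_
        have hAr : (A.card : ℝ) ≤ r := (Finset.mem_filter.1 hA).2
        have tail := binomialRandom_real_ncard_gBall_one_lt p (A := A) hd hd1 hη0 hη (by
          rw [ncard_coe_finset]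
          exact (mul_le_mul_of_nonneg_left hAr p.2.1).trans hr)
        rwa [ncard_coe_finset] at tail
    _ ≤ ∑ A ∈ (Finset.univ : Finset (Finset V)).erase ∅, x ^ A.card :=
        Finset.sum_le_sum_of_subset_of_nonneg (Finset.filter_subset _ _) fun _ _ _ ↦ by positivity
    _ = (1 + x) ^ Nat.card V - 1 := by
        rw [Finset.sum_erase_eq_sub (Finset.mem_univ _), Nat.card_eq_fintype_card, add_comm,
          ← Fintype.sum_pow_mul_eq_add_pow]
        simp

end Expansion

section Exploration

open MeasureTheory ProbabilityTheory unitInterval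

variable {V : Type*} {G H : SimpleGraph V}

lemma gSphere_succ (G : SimpleGraph V) (w : V) (m : ℕ) :
    gSphere G w (m + 1) = gBall G {w} (m + 1) \ gBall G {w} m := by
  ext s
  simp only [gSphere, gBall, mem_singleton_iff, exists_eq_left, Set.mem_sdiff, mem_ofPred_eq,
    not_le]
  rw [le_antisymm_iff, Nat.cast_add_one, ENat.natCast_add_one_le_iff]

lemma gBall_mono {A A' : Set V} (hA : A ⊆ A') (G : SimpleGraph V) (j : ℕ) :
    gBall G A j ⊆ gBall G A' j :=
  fun _ ⟨a, ha, h⟩ ↦ ⟨a, hA ha, h⟩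

lemma separatingSphere_succ_subset (G : SimpleGraph V) (u w : V) (m : ℕ) :
    separatingSphere G u w (m + 1) ⊆ gBall G {u, w} (m + 1) \ gBall G {u, w} m := by
  rintro s ⟨hw, hu⟩
  rw [gSphere_succ] at hw
  refine ⟨gBall_mono (subset_insert u {w}) G _ hw.1, ?_⟩
  rw [insert_eq, gBall_union]
  exact fun h ↦ h.elim (fun h ↦ hu (gBall_mono_radius G _ m.le_succ h)) hw.2

lemma separatingSphere_congr {u w : V} {m : ℕ}
    (hGH : incidentPairs (gBall G {u, w} m) ∩ G.edgeSet
      = incidentPairs (gBall G {u, w} m) ∩ H.edgeSet) :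
    separatingSphere H u w (m + 1) = separatingSphere G u w (m + 1) := by
  have ball {A : Set V} (hA : A ⊆ {u, w}) {j : ℕ} (hj : j ≤ m + 1) : gBall H A j = gBall G A j :=
    gBall_congr (gBall_mono hA G m) hGH hj
  simp only [separatingSphere, gSphere_succ, ball (singleton_subset_iff.2 (mem_insert u {w})),
    ball (subset_insert u {w}), le_refl, Nat.le_succ]

/-- What a search from `A` to depth `m` reveals of `G`. -/
def revealed (A : Set V) (m : ℕ) (G : SimpleGraph V) : Set V × Set (Sym2 V) :=
  (gBall G A m, incidentPairs (gBall G A m) ∩ G.edgeSet)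

lemma revealed_eq_iff {A : Set V} {m : ℕ} : revealed A m H = revealed A m G ↔
    incidentPairs (gBall G A m) ∩ G.edgeSet = incidentPairs (gBall G A m) ∩ H.edgeSet := by
  constructor
  · intro h
    obtain ⟨ball, edges⟩ := Prod.mk.inj h
    rw [← edges, ball]
  · intro h
    have ball : gBall H A m = gBall G A m := gBall_congr Subset.rfl h m.le_succ
    rw [revealed, revealed, ball, h]

lemma setOf_attached_subset_separatingSphere {u w : V} {m : ℕ}
    (hGH : incidentPairs (gBall G {u, w} m) ∩ G.edgeSet
      = incidentPairs (gBall G {u, w} m) ∩ H.edgeSet) :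
    {s ∈ (gBall G {u, w} (m + 1))ᶜ | H ∈ attachedEvent (gBall G {u} (m + 1) \ gBall G {u, w} m)
      (separatingSphere G u w (m + 1)) s} ⊆ separatingSphere H u w (m + 2) := by
  rw [← separatingSphere_congr hGH, ← gBall_congr Subset.rfl hGH m.le_succ,
    ← gBall_congr Subset.rfl hGH le_rfl,
    ← gBall_congr (gBall_mono (singleton_subset_iff.2 (mem_insert u {w})) G m) hGH le_rfl]
  rintro s ⟨hs, ⟨y, hy, hsy⟩, hP⟩
  have hs_ball {v : V} (hv : v ∈ ({u, w} : Set V)) : s ∉ gBall H {v} (m + 1) :=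
    fun h ↦ hs (gBall_mono (singleton_subset_iff.2 hv) H _ h)
  refine ⟨(gSphere_succ H w (m + 1)).superset ⟨?_, hs_ball (by simp)⟩, fun hsu ↦ ?_⟩
  · rw [gBall_succ]
    exact mem_gBall_one.2 (.inr ⟨y, ((gSphere_succ H w m).subset hy.1).1, hsy.symm⟩)
  · rw [gBall_succ, mem_gBall_one] at hsu
    obtain ⟨x, hx, hxs⟩ := hsu.resolve_left (hs_ball (by simp))
    refine hP x ⟨hx, fun hxC ↦ hs ?_⟩ hxs.symm
    rw [gBall_succ]
    exact mem_gBall_one.2 (.inr ⟨x, hxC, hxs⟩)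

lemma disjoint_incidentPairs_edgeStar {C Y : Set V} {s : V} (hs : s ∉ C) (hY : Disjoint C Y) :
    Disjoint (incidentPairs C) (edgeStar s Y) :=
  disjoint_left.2 <| by
    rintro _ ⟨v, hv, hve⟩ ⟨y, hy, rfl⟩
    rcases Sym2.mem_iff.1 hve with rfl | rfl
    exacts [hs hv, disjoint_left.1 hY hv hy]

variable [Finite V]

lemma indepSet_ncard_attached_le (p : I) {C P Q T : Set V} {A : Set (SimpleGraph V)}
    (hA : DeterminedBy (incidentPairs C) A) (hCT : Disjoint C T) (hCPQ : Disjoint C (P ∪ Q))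
    (x : ℝ) :
    IndepSet A {G | ({s ∈ T | G ∈ attachedEvent P Q s}.ncard : ℝ) ≤ x} G(V, p) := by
  refine indepSet_of_determinedBy p hA (F₂ := ⋃ s ∈ T, edgeStar s (P ∪ Q)) ?_ ?_
  · intro G H hGH hG
    have attached_iff (s : V) (hs : s ∈ T) :
        G ∈ attachedEvent P Q s ↔ H ∈ attachedEvent P Q s :=
      have det := (determinedBy_attachedEvent P Q s).mono
        (subset_biUnion_of_mem (u := fun s ↦ edgeStar s (P ∪ Q)) hs)
      ⟨fun h ↦ det hGH h, fun h ↦ det hGH.symm h⟩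
    have : {s ∈ T | G ∈ attachedEvent P Q s} = {s ∈ T | H ∈ attachedEvent P Q s} := by
      ext s
      exact and_congr_right (attached_iff s)
    rwa [mem_ofPred_eq, this] at hG
  · exact disjoint_iUnion₂_right.2 fun s hs ↦
      disjoint_incidentPairs_edgeStar (disjoint_right.1 hCT hs) hCPQ

/-- The event that, after a search from `u` and `w` to radius `m + 1`, at least `N` vertices are
unexplored and each of them is attached to the next separating sphere with conditional probability
at least `q`, but this sphere has at most `(1 - η) * (N * q)` vertices. -/
def smallSphereEvent (p : I) (m : ℕ) (N q η : ℝ) (u w : V) : Set (SimpleGraph V) :=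
  {G | N ≤ (gBall G {u, w} (m + 1))ᶜ.ncard ∧
    q ≤ (1 - (1 - p : ℝ) ^ (separatingSphere G u w (m + 1)).ncard)
      * (1 - p : ℝ) ^ (gBall G {u} (m + 1)).ncard ∧
    ((separatingSphere G u w (m + 2)).ncard : ℝ) ≤ (1 - η) * (N * q)}

/-- Reveal the edges at the vertices within distance `m` of `u` or `w`, which determines the balls
of radius `m + 1`; the edges that decide which unexplored vertices lie in the next sphere around
`w` but not in the ball around `u` are still independent of everything revealed. -/
lemma binomialRandom_real_smallSphereEvent_le (p : I) (u w : V) (m : ℕ)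
    {N q η : ℝ} (hN : 0 ≤ N) (hq : 0 ≤ q) (hη : 0 ≤ η) :
    G(V, p).real (smallSphereEvent p m N q η u w) ≤ Real.exp (-(N * q * η ^ 2 / 2)) := by
  refine measureReal_le_of_forall_fiber _ (revealed {u, w} m) (Real.exp_nonneg _)
    fun G₀ ⟨hN₀, hq₀, _⟩ ↦ ?_
  set fiber := revealed {u, w} m ⁻¹' {revealed {u, w} m G₀}
  set C := gBall G₀ {u, w} m
  set T := (gBall G₀ {u, w} (m + 1))ᶜ
  set P := gBall G₀ {u} (m + 1) \ C
  set Q := separatingSphere G₀ u w (m + 1)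
  have hPQ : Disjoint P Q := disjoint_left.2 fun s hsP hsQ ↦ hsQ.2 hsP.1
  have hQ := separatingSphere_succ_subset G₀ u w m
  have hT : Disjoint T (P ∪ Q) := disjoint_compl_left_iff_subset.2 <| union_subset
    (sdiff_subset.trans (gBall_mono (by simp) G₀ _)) (hQ.trans sdiff_subset)
  have hCT : Disjoint C T := disjoint_compl_right_iff_subset.2 (gBall_mono_radius G₀ _ m.le_succ)
  have hCPQ : Disjoint C (P ∪ Q) :=
    disjoint_union_right.2 ⟨disjoint_sdiff_right, disjoint_sdiff_right.mono_right hQ⟩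
  let few : Set (SimpleGraph V) :=
    {G | ({s ∈ T | G ∈ attachedEvent P Q s}.ncard : ℝ) ≤ (1 - η) * (N * q)}
  have fiber_determined : DeterminedBy (incidentPairs C) fiber := fun G H hGH hG ↦
    revealed_eq_iff.2 ((revealed_eq_iff.1 hG).trans hGH)
  have few_prob : G(V, p).real few ≤ Real.exp (-(N * q * η ^ 2 / 2)) := by
    refine binomialRandom_real_ncard_attached_le p hPQ hT hN₀ hq (hq₀.trans ?_) hN hη
    have hp0 : (0 : ℝ) ≤ 1 - p := sub_nonneg.2 p.2.2
    have hp1 : (1 - p : ℝ) ≤ 1 := sub_le_self _ p.2.1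
    gcongr ?_ * ?_
    · exact sub_nonneg.2 (pow_le_one₀ hp0 hp1)
    · exact pow_le_pow_of_le_one hp0 hp1 (ncard_le_ncard sdiff_subset)
  have indep := indepSet_ncard_attached_le p fiber_determined hCT hCPQ ((1 - η) * (N * q))
  calc _ ≤ G(V, p).real (fiber ∩ few) := by
        refine measureReal_mono fun H ⟨hH, _, _, hsmall⟩ ↦ ⟨hH, hsmall.trans' ?_⟩
        exact mod_cast ncard_le_ncard (setOf_attached_subset_separatingSphere
          (revealed_eq_iff.1 hH))
    _ = G(V, p).real fiber * G(V, p).real few := by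
        simp only [measureReal_def, few, indep.measure_inter_eq_mul, ENNReal.toReal_mul]
    _ ≤ _ := mul_le_mul_of_nonneg_left few_prob measureReal_nonneg

end Exploration

section Distinguishing

open MeasureTheory ProbabilityTheory unitInterval

variable {V : Type*} [Finite V] {p : I} {d η N q δ b : ℝ} {m : ℕ}

/-- Every two vertices have different distances to at least `M` vertices. -/
def DistinguishesPairs {V : Type*} (G : SimpleGraph V) (M : ℝ) : Prop :=
  ∀ u w : V, u ≠ w → M ≤ {s | G.dist s u ≠ G.dist s w}.ncard

lemma distinguishesPairs_of_notMem_smallSphereEvent {G : SimpleGraph V} {L s : ℝ} (hp : p < 1)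
    (hL1 : 1 ≤ L) (hs0 : 0 ≤ s) (hL : ∀ v, ((gBall G {v} 1).ncard : ℝ) ≤ L)
    (hs : SmallSetExpansion G s (2 * L ^ m)) (hb : b ≤ 2 * s ^ (m + 1) - L ^ (m + 1) - L ^ m)
    (hN : N + 2 * L ^ (m + 1) ≤ Nat.card V)
    (hq : q ≤ (1 - (1 - p : ℝ) ^ b) * (1 - p : ℝ) ^ (L ^ (m + 1)))
    (hG : ∀ u w, G ∉ smallSphereEvent p m N q δ u w) :
    DistinguishesPairs G (2 * (b + (1 - δ) * (N * q))) := by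
  have hp0 : (0 : ℝ) < 1 - p := sub_pos.2 hp
  have hp1 : (1 - p : ℝ) ≤ 1 := sub_le_self _ p.2.1
  have one_side {u w : V} (huw : u ≠ w) : b + (1 - δ) * (N * q)
      ≤ (separatingSphere G u w (m + 1)).ncard + (separatingSphere G u w (m + 2)).ncard := by
    have sphere := hb.trans (le_ncard_separatingSphere hL hL1 hs0 hs huw)
    have unexplored : N ≤ (gBall G {u, w} (m + 1))ᶜ.ncard := by
      have explored := ncard_gBall_le hL (by linarith) {u, w} (m + 1)
      rw [ncard_pair huw] at explored
      have total : ((gBall G {u, w} (m + 1)).ncard + (gBall G {u, w} (m + 1))ᶜ.ncard : ℝ)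
          = Nat.card V := mod_cast ncard_add_ncard_compl _
      push_cast at explored
      linarith
    have ball : ((gBall G {u} (m + 1)).ncard : ℝ) ≤ L ^ (m + 1) := by
      simpa using ncard_gBall_le hL (by linarith) {u} (m + 1)
    have attach : q ≤ (1 - (1 - p : ℝ) ^ (separatingSphere G u w (m + 1)).ncard)
        * (1 - p : ℝ) ^ (gBall G {u} (m + 1)).ncard := by
      refine hq.trans ?_
      simp_rw [← Real.rpow_natCast _ (Set.ncard _)]
      refine mul_le_mul (sub_le_sub_left ?_ 1) ?_ (by positivity) (sub_nonneg.2 ?_)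
      · exact Real.rpow_le_rpow_of_exponent_ge hp0 hp1 sphere
      · exact Real.rpow_le_rpow_of_exponent_ge hp0 hp1 ball
      · exact Real.rpow_le_one hp0.le hp1 (by positivity)
    have large := lt_of_not_ge fun h ↦ hG u w ⟨unexplored, attach, h⟩
    linarith
  intro u w huw
  have count : ((separatingSphere G u w (m + 1)).ncard + (separatingSphere G u w (m + 2)).ncard
      + ((separatingSphere G w u (m + 1)).ncard + (separatingSphere G w u (m + 2)).ncard) : ℝ)
      ≤ {s | G.dist s u ≠ G.dist s w}.ncard :=
    mod_cast sum_ncard_separatingSphere_le G u w (by simp) (by simp) (by simp)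
  linarith [one_side huw, one_side huw.symm]

lemma binomialRandom_real_not_distinguishesPairs (hp : p < 1) (hd : d = p * Nat.card V)
    (hd1 : 1 ≤ d) (hη0 : 0 ≤ η) (hη : η ≤ 1 / 2) (hηd : 1 ≤ η * d)
    (hr : p * (2 * ((1 + 2 * η) * d) ^ m) ≤ η / 2)
    (hb : b ≤ 2 * ((1 - 2 * η) * d) ^ (m + 1) - ((1 + 2 * η) * d) ^ (m + 1)
      - ((1 + 2 * η) * d) ^ m)
    (hN0 : 0 ≤ N) (hN : N + 2 * ((1 + 2 * η) * d) ^ (m + 1) ≤ Nat.card V) (hq0 : 0 ≤ q)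
    (hq : q ≤ (1 - (1 - p : ℝ) ^ b) * (1 - p : ℝ) ^ ((1 + 2 * η) * d) ^ (m + 1)) (hδ : 0 ≤ δ) :
    G(V, p).real {G | (∀ v, ((gBall G {v} 1).ncard : ℝ) ≤ (1 + 2 * η) * d) ∧
        DistinguishesPairs G (2 * (b + (1 - δ) * (N * q)))}ᶜ
      ≤ Nat.card V * Real.exp (-(d * η ^ 2 / 4))
        + ((1 + Real.exp (-(d * η ^ 2 / 4))) ^ Nat.card V - 1)
        + Nat.card V ^ 2 * Real.exp (-(N * q * δ ^ 2 / 2)) := by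
  have := Fintype.ofFinite V
  have cover : {G | (∀ v, ((gBall G {v} 1).ncard : ℝ) ≤ (1 + 2 * η) * d) ∧
        DistinguishesPairs G (2 * (b + (1 - δ) * (N * q)))}ᶜ
      ⊆ (⋃ v : V, {G | (1 + 2 * η) * d < (gBall G {v} 1).ncard})
        ∪ {G | ¬ SmallSetExpansion G ((1 - 2 * η) * d) (2 * ((1 + 2 * η) * d) ^ m)}
        ∪ ⋃ uw : V × V, smallSphereEvent p m N q δ uw.1 uw.2 := by
    intro G hG
    by_contra! hgood
    simp only [mem_union, mem_iUnion, mem_ofPred_eq, not_or, not_exists, not_lt, not_not,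
      Prod.forall] at hgood
    obtain ⟨⟨degree, expansion⟩, sphere⟩ := hgood
    exact hG ⟨degree, distinguishesPairs_of_notMem_smallSphereEvent hp (by nlinarith)
      (by nlinarith) degree expansion hb hN hq sphere⟩
  refine (measureReal_mono cover).trans ((measureReal_union_le _ _).trans
    (add_le_add ((measureReal_union_le _ _).trans (add_le_add ?_ ?_)) ?_))
  · refine (measureReal_iUnion_fintype_le _).trans ((Finset.sum_le_card_nsmul _ _ _ fun v _ ↦
      binomialRandom_real_lt_ncard_gBall_one p v hd.ge hη0 (by linarith) hηd).trans_eq ?_)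
    rw [nsmul_eq_mul, Finset.card_univ, Nat.card_eq_fintype_card]
  · exact binomialRandom_real_not_smallSetExpansion p hd hd1 hη0 hη hr
  · refine (measureReal_iUnion_fintype_le _).trans ((Finset.sum_le_card_nsmul _ _ _ fun uw _ ↦
      binomialRandom_real_smallSphereEvent_le p uw.1 uw.2 m hN0 hq0 hδ).trans_eq ?_)
    rw [nsmul_eq_mul, Finset.card_univ, ← Nat.card_eq_fintype_card, Nat.card_prod, Nat.cast_mul,
      ← sq]

end Distinguishing

section LocalizationGame

variable {V : Type*} {G : SimpleGraph V} {k : ℕ}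

lemma gameHistory_succ_inj {σ : CopStrategy V} {w w' : ℕ → V} {t : ℕ} :
    gameHistory G σ w' (t + 1) = gameHistory G σ w (t + 1) ↔
      gameHistory G σ w' t = gameHistory G σ w t ∧
        probe G (σ (gameHistory G σ w' t)) (w' t) = probe G (σ (gameHistory G σ w t)) (w t) := by
  simp only [gameHistory, ← List.concat_eq_append, List.concat_inj]

lemma probe_eq_probe_iff {S : Finset V} {u v : V} :
    probe G S u = probe G S v ↔ ∀ s ∈ S, G.dist s u = G.dist s v := by
  simp only [probe, Prod.mk.injEq, true_and, funext_iff]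
  grind

/-- The vertices of `A` at which the robber may be when probing `S` yields the result `r`. -/
def consistentVertices (G : SimpleGraph V) (A : Set V) (S : Finset V) (r : Finset V × (V → ℕ)) :
    Set V :=
  {v ∈ A | probe G S v = r}

/-- The vertices at which the robber may be after the probe results `h`, when the sensors are
chosen by `pick` as a function of this set. -/
def candidates (G : SimpleGraph V) (pick : Set V → Finset V) (h : List (Finset V × (V → ℕ))) :
    Set V :=
  h.foldl (fun A r ↦ gBall G (consistentVertices G A (pick A) r) 1) univ

lemma candidates_gameHistory_succ (pick : Set V → Finset V) (w : ℕ → V) (t : ℕ) :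
    let σ : CopStrategy V := fun h ↦ pick (candidates G pick h)
    let A := candidates G pick (gameHistory G σ w t)
    candidates G pick (gameHistory G σ w (t + 1))
      = gBall G (consistentVertices G A (pick A) (probe G (pick A) (w t))) 1 := by
  simp only [candidates, gameHistory, List.foldl_append, List.foldl_cons, List.foldl_nil]

lemma IsRobberWalk.mem_candidates {w : ℕ → V} (hw : IsRobberWalk G w) (pick : Set V → Finset V)
    (t : ℕ) : w t ∈ candidates G pick (gameHistory G (fun h ↦ pick (candidates G pick h)) w t) := by
  induction t with
  | zero => exact mem_univ _
  | succ t ih =>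
    rw [candidates_gameHistory_succ, mem_gBall_one]
    exact (hw t).imp (fun stay ↦ by rw [stay]; exact ⟨ih, rfl⟩) fun move ↦ ⟨w t, ⟨ih, rfl⟩, move⟩

lemma copsWin_of_forall_exists_sensors [Finite V]
    (h : ∀ A : Set V, ∃ S : Finset V, S.card = k ∧ ∀ v ∈ A,
      (consistentVertices G A S (probe G S v)).Subsingleton ∨
        (gBall G (consistentVertices G A S (probe G S v)) 1).ncard < A.ncard) :
    CopsWin G k := by
  choose pick card_pick progress using h
  refine ⟨fun h ↦ pick (candidates G pick h), fun h ↦ card_pick _, fun w hw ↦ ?_⟩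
  set σ : CopStrategy V := fun h ↦ pick (candidates G pick h) with hσ
  by_contra! escape
  have decreasing (t : ℕ) : (candidates G pick (gameHistory G σ w (t + 1))).ncard
      < (candidates G pick (gameHistory G σ w t)).ncard := by
    rw [candidates_gameHistory_succ]
    refine (progress _ _ (hw.mem_candidates pick t)).resolve_left fun located ↦ ?_
    obtain ⟨w', hw', same_history, hne⟩ := escape t
    obtain ⟨same_past, same_probe⟩ := gameHistory_succ_inj.1 same_history
    have hmem := hw'.mem_candidates pick t
    rw [← hσ, same_past] at hmem
    rw [same_past] at same_probe
    exact hne (located ⟨hmem, same_probe⟩ ⟨hw.mem_candidates pick t, rfl⟩)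
  exact not_strictAnti_of_wellFoundedLT
    (fun t ↦ (candidates G pick (gameHistory G σ w t)).ncard) (strictAnti_nat_of_succ_lt decreasing)

lemma exists_ncard_forall_mem_le {ι V : Type*} [Finite V] [Nonempty V] {β : ℝ} {T : Set ι}
    (hT : T.Finite) {B : ι → Set V} (hB : ∀ x ∈ T, ((B x).ncard : ℝ) ≤ β * Nat.card V) (k : ℕ) :
    ∃ f : Fin k → V, ({x ∈ T | ∀ j, f j ∈ B x}.ncard : ℝ) ≤ T.ncard * β ^ k := by
  classical
  have := Fintype.ofFinite V
  lift T to Finset ι using hT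
  have double_count : ∑ f : Fin k → V, ({x ∈ T | ∀ j, f j ∈ B x}.card : ℝ)
      = ∑ x ∈ T, ((B x).ncard : ℝ) ^ k := by
    simp only [Finset.card_filter, Nat.cast_sum]
    rw [Finset.sum_comm]
    refine Finset.sum_congr rfl fun x _ ↦ ?_
    have product : Finset.univ.filter (fun f : Fin k → V ↦ ∀ j, f j ∈ B x)
        = Fintype.piFinset fun _ ↦ (B x).toFinset := by
      ext f
      simp
    rw [← Nat.cast_sum, ← Finset.card_filter, product, Fintype.card_piFinset_const, Nat.cast_pow,
      ncard_eq_toFinset_card']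
  obtain ⟨f, -, hf⟩ := Finset.exists_le_of_sum_le (Finset.univ_nonempty (α := Fin k → V)) <| calc
    ∑ f : Fin k → V, ({x ∈ T | ∀ j, f j ∈ B x}.card : ℝ) = ∑ x ∈ T, ((B x).ncard : ℝ) ^ k :=
      double_count
    _ ≤ ∑ _x ∈ T, (β * Nat.card V) ^ k := by
      gcongr with x hx
      exact hB x hx
    _ = ∑ _f : Fin k → V, T.card * β ^ k := by
      simp only [Finset.sum_const, nsmul_eq_mul, Finset.card_univ, Fintype.card_fun,
        Fintype.card_fin, Nat.cast_pow, Nat.card_eq_fintype_card]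
      ring
  simp only [← ncard_coe_finset, Finset.coe_filter] at hf
  exact ⟨f, hf⟩

lemma DistinguishesPairs.exists_sensors [Finite V] [Nonempty V] {z : ℝ}
    (hG : DistinguishesPairs G (z * Nat.card V)) (hk : k ≤ Nat.card V) (A : Set V) :
    ∃ S : Finset V, S.card = k ∧
      ({x ∈ A.offDiag | ∀ s ∈ S, G.dist s x.1 = G.dist s x.2}.ncard : ℝ)
        ≤ A.offDiag.ncard * (1 - z) ^ k := by
  classical
  have := Fintype.ofFinite V
  obtain ⟨f, hf⟩ := exists_ncard_forall_mem_le (β := 1 - z) (T := A.offDiag) (toFinite _)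
    (B := fun x ↦ {s | G.dist s x.1 = G.dist s x.2}) (fun x hx ↦ by
      have split : ({s | G.dist s x.1 = G.dist s x.2}.ncard
          + {s | G.dist s x.1 ≠ G.dist s x.2}.ncard : ℝ) = Nat.card V :=
        mod_cast ncard_add_ncard_compl _
      linarith [hG x.1 x.2 hx.2.2]) k
  obtain ⟨S, hfS, hS⟩ := Finset.exists_superset_card_eq (s := Finset.univ.image f) (n := k)
    (by simpa using Finset.card_image_le (s := Finset.univ) (f := f))
    (by rwa [← Nat.card_eq_fintype_card])
  refine ⟨S, hS, le_trans (mod_cast ncard_le_ncard fun x hx ↦ ?_) hf⟩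
  exact ⟨hx.1, fun j ↦ hx.2 _ (hfS (Finset.mem_image_of_mem f (Finset.mem_univ j)))⟩

lemma natCast_ncard_offDiag {α : Type*} [Finite α] (A : Set α) :
    (A.offDiag.ncard : ℝ) = A.ncard ^ 2 - A.ncard := by
  lift A to Finset α using A.toFinite
  rw [← Finset.coe_offDiag, ncard_coe_finset, ncard_coe_finset, Finset.offDiag_card,
    Nat.cast_sub (Nat.le_mul_self _), Nat.cast_mul, sq]

lemma DistinguishesPairs.copsWin [Finite V] [Nonempty V] {z D : ℝ}
    (hG : DistinguishesPairs G (z * Nat.card V)) (hz : z ≤ 1) (hk : k ≤ Nat.card V)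
    (hD : ∀ v, ((gBall G {v} 1).ncard : ℝ) ≤ D) (hkD : 2 * D ^ 2 * (1 - z) ^ k < 1) :
    CopsWin G k := by
  refine copsWin_of_forall_exists_sensors fun A ↦ ?_
  obtain ⟨S, hS, undistinguished⟩ := hG.exists_sensors hk A
  refine ⟨S, hS, fun v hv ↦ ?_⟩
  set C := consistentVertices G A S (probe G S v)
  refine or_iff_not_imp_left.2 fun hC1 ↦ ?_
  have pairs : (C.offDiag.ncard : ℝ) ≤ A.offDiag.ncard * (1 - z) ^ k := by
    refine le_trans (mod_cast ncard_le_ncard fun x hx ↦ ?_) undistinguished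
    exact ⟨⟨hx.1.1, hx.2.1.1, hx.2.2⟩, probe_eq_probe_iff.1 (hx.1.2.trans hx.2.1.2.symm)⟩
  have two_le : (2 : ℝ) ≤ C.ncard :=
    mod_cast one_lt_ncard_iff_nontrivial.2 (not_subsingleton_iff.1 hC1)
  have hA : (0 : ℝ) < A.ncard := mod_cast (ncard_pos).2 ⟨v, hv⟩
  have hz0 : 0 ≤ (1 - z) ^ k := pow_nonneg (sub_nonneg.2 hz) k
  rw [natCast_ncard_offDiag, natCast_ncard_offDiag] at pairs
  have hCA : (D * C.ncard) ^ 2 < (A.ncard : ℝ) ^ 2 := calc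
    (D * C.ncard) ^ 2 = D ^ 2 * (C.ncard : ℝ) ^ 2 := mul_pow _ _ _
    _ ≤ D ^ 2 * (2 * ((A.ncard : ℝ) ^ 2 * (1 - z) ^ k)) := by
      gcongr
      nlinarith
    _ = 2 * D ^ 2 * (1 - z) ^ k * (A.ncard : ℝ) ^ 2 := by ring
    _ < 1 * (A.ncard : ℝ) ^ 2 := by gcongr
    _ = (A.ncard : ℝ) ^ 2 := one_mul _
  exact_mod_cast (ncard_gBall_one_le hD C).trans_lt (lt_of_pow_lt_pow_left₀ 2 hA.le hCA)

end LocalizationGame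

section SensorBound

open MeasureTheory ProbabilityTheory unitInterval

lemma DistinguishesPairs.localizationNumber_le {V : Type*} [Finite V] [Nonempty V]
    {G : SimpleGraph V} {M D K : ℝ} (hG : DistinguishesPairs G M) (hM0 : 0 < M)
    (hM : M ≤ Nat.card V) (hD1 : 1 ≤ D) (hD : ∀ v, ((gBall G {v} 1).ncard : ℝ) ≤ D)
    (hKM : Nat.card V * Real.log (2 * D ^ 2) / M + 1 ≤ K) (hK : K ≤ Nat.card V) :
    localizationNumber G ≤ K := by
  have hV : (0 : ℝ) < Nat.card V := mod_cast Nat.card_pos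
  have log_nonneg : 0 ≤ Real.log (2 * D ^ 2) := Real.log_nonneg (by nlinarith)
  have hK0 : 0 ≤ K := le_trans (by positivity) hKM
  have few : (1 - M / Nat.card V) ^ ⌊K⌋₊ < (2 * D ^ 2)⁻¹ := calc
    (1 - M / Nat.card V) ^ ⌊K⌋₊ ≤ Real.exp (-(M / Nat.card V)) ^ ⌊K⌋₊ :=
      pow_le_pow_left₀ (sub_nonneg.2 ((div_le_one hV).2 hM)) (Real.one_sub_le_exp_neg _) _
    _ = Real.exp (-(⌊K⌋₊ * (M / Nat.card V))) := by rw [← Real.exp_nat_mul, mul_neg]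
    _ < Real.exp (-Real.log (2 * D ^ 2)) := by
      gcongr
      rw [← mul_div_assoc, lt_div_iff₀ hV, ← div_lt_iff₀ hM0, mul_comm]
      linarith [Nat.lt_floor_add_one K]
    _ = (2 * D ^ 2)⁻¹ := by rw [Real.exp_neg, Real.exp_log (by positivity)]
  have win : CopsWin G ⌊K⌋₊ := by
    refine DistinguishesPairs.copsWin (z := M / Nat.card V) (by rwa [div_mul_cancel₀ _ hV.ne'])
      ((div_le_one hV).2 hM) (Nat.floor_le_of_le hK) hD ?_
    rwa [mul_comm, ← lt_div_iff₀ (by positivity), one_div]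
  calc (localizationNumber G : ℝ) ≤ ⌊K⌋₊ := mod_cast Nat.sInf_le win
    _ ≤ K := Nat.floor_le hK0

/-- The relative deviation `η` from `d` that is allowed for the growth rates of neighbourhoods in
`G(n, d / n)`; chosen such that `exp (-d η ^ 2 / 4) = n ^ (-3)`. -/
noncomputable def growthDeviation (n : ℕ) (d : ℝ) : ℝ :=
  √(12 * Real.log n / d)

/-- The bound on the sizes of the closed neighbourhoods in `G(n, d / n)`. -/
noncomputable def degreeBound (n : ℕ) (d : ℝ) : ℝ :=
  (1 + 2 * growthDeviation n d) * d

/-- The lower bound on the sizes of the separating spheres of radius `m + 1` in `G(n, d / n)`. -/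
noncomputable def sphereBound (n : ℕ) (d : ℝ) (m : ℕ) : ℝ :=
  2 * ((1 - 2 * growthDeviation n d) * d) ^ (m + 1)
    - degreeBound n d ^ (m + 1) - degreeBound n d ^ m

/-- The lower bound on the number of vertices of `G(n, d / n)` at distance more than `m + 1` from
two given ones. -/
noncomputable def unexploredBound (n : ℕ) (d : ℝ) (m : ℕ) : ℝ :=
  n - 2 * degreeBound n d ^ (m + 1)

/-- The lower bound on the probability that, in `G(n, d / n)`, an unexplored vertex has a neighbour
in the separating sphere of radius `m + 1` and no neighbour in the other ball of that radius. -/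
noncomputable def attachmentBound (n : ℕ) (d : ℝ) (m : ℕ) : ℝ :=
  (1 - (1 - d / n) ^ sphereBound n d m) * (1 - d / n) ^ degreeBound n d ^ (m + 1)

/-- The lower bound on the number of vertices that distinguish two given vertices of `G(n, d / n)`
through the spheres of radii `m + 1` and `m + 2`. -/
noncomputable def distinguishingBound (n : ℕ) (d : ℝ) (m : ℕ) : ℝ :=
  2 * (sphereBound n d m + (1 - growthDeviation n d * Real.log n)
    * (unexploredBound n d m * attachmentBound n d m))

/-- The number of sensors that suffices, up to rounding down, to localize a robber in a graph with
`n` vertices whose vertices are distinguished as well as those of `G(n, d / n)`. -/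
noncomputable def sensorBound (n : ℕ) (d : ℝ) (m : ℕ) : ℝ :=
  n * Real.log (2 * degreeBound n d ^ 2) / distinguishingBound n d m + 1

lemma abs_one_add_pow_sub_one_le {x : ℝ} {k : ℕ} (hx : |k * x| ≤ 1) :
    |(1 + x) ^ k - 1| ≤ 2 * |k * x| := by
  have prod := Finset.norm_prod_one_add_sub_one_le (Finset.range k) fun _ ↦ x
  simp only [Finset.prod_const, Finset.sum_const, Finset.card_range, nsmul_eq_mul,
    Real.norm_eq_abs] at prod
  rw [abs_mul, Nat.abs_cast] at hx ⊢
  have exp_le := Real.abs_exp_sub_one_le (x := k * |x|) (by rwa [abs_of_nonneg (by positivity)])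
  rw [abs_of_nonneg (by positivity : 0 ≤ k * |x|)] at exp_le
  exact prod.trans ((le_abs_self _).trans exp_le)

lemma failure_bound_le {n : ℕ} (hn : 1 ≤ n) {x y : ℝ} (hx : 3 * Real.log n ≤ x)
    (hy : 3 * Real.log n ≤ y) :
    n * Real.exp (-x) + ((1 + Real.exp (-x)) ^ n - 1) + n ^ 2 * Real.exp (-y) ≤ 4 / n := by
  have hn1 : (1 : ℝ) ≤ n := mod_cast hn
  have exp_le {x : ℝ} (hx : 3 * Real.log n ≤ x) : n ^ 2 * Real.exp (-x) ≤ 1 / n := by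
    have cube : Real.exp (-(3 * Real.log n)) = 1 / (n : ℝ) ^ 3 := by
      rw [Real.exp_neg, show (3 : ℝ) = (3 : ℕ) from rfl, Real.exp_nat_mul,
        Real.exp_log (by positivity), one_div]
    calc (n : ℝ) ^ 2 * Real.exp (-x) ≤ n ^ 2 * Real.exp (-(3 * Real.log n)) := by gcongr
      _ = 1 / (n : ℝ) := by rw [cube]; field_simp
  have linear : n * Real.exp (-x) ≤ 1 / n :=
    le_trans (by gcongr; exact le_self_pow₀ hn1 two_ne_zero) (exp_le hx)
  have abs_eq : |n * Real.exp (-x)| = n * Real.exp (-x) := abs_of_nonneg (by positivity)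
  have power := (le_abs_self _).trans (abs_one_add_pow_sub_one_le (k := n) (x := Real.exp (-x))
    (by rw [abs_eq]; exact linear.trans ((div_le_one (by positivity)).2 hn1)))
  rw [abs_eq] at power
  linarith [exp_le hy, (by ring : (4 : ℝ) / n = 4 * (1 / n))]

lemma gnpProb_localizationNumber_le_sensorBound {n m : ℕ} {p d : ℝ} (hn : 1 ≤ n) (hp0 : 0 ≤ p)
    (hp : p < 1) (hd : d = p * n) (hd1 : 1 ≤ d) (hη : growthDeviation n d ≤ 1 / 2)
    (hηd : 1 ≤ growthDeviation n d * d)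
    (hr : p * (2 * degreeBound n d ^ m) ≤ growthDeviation n d / 2)
    (hN0 : 0 ≤ unexploredBound n d m) (hq0 : 0 ≤ attachmentBound n d m)
    (hNq : 3 * Real.log n ≤ unexploredBound n d m * attachmentBound n d m
      * (growthDeviation n d * Real.log n) ^ 2 / 2)
    (hM0 : 0 < distinguishingBound n d m) (hM : distinguishingBound n d m ≤ n)
    (hK : sensorBound n d m ≤ n) :
    1 - 4 / n ≤ gnpProb n p {G | localizationNumber G ≤ sensorBound n d m} := by
  have hn0 : (0 : ℝ) < n := mod_cast hn
  have : Nonempty (Fin n) := ⟨0, hn⟩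
  have hη0 : 0 ≤ growthDeviation n d := Real.sqrt_nonneg _
  have hpd : d / n = p := by rw [hd, mul_div_cancel_right₀ _ hn0.ne']
  have hdη : d * growthDeviation n d ^ 2 / 4 = 3 * Real.log n := by
    rw [growthDeviation, Real.sq_sqrt (by positivity)]
    field_simp
    ring
  lift p to I using ⟨hp0, hp.le⟩
  have failure := binomialRandom_real_not_distinguishesPairs (V := Fin n) (p := p) (m := m)
    (b := sphereBound n d m) (N := unexploredBound n d m) (q := attachmentBound n d m)
    (δ := growthDeviation n d * Real.log n) (mod_cast hp) (by simpa using hd) hd1 hη0 hη hηd hr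
    le_rfl hN0 (by simp [unexploredBound, degreeBound]) hq0
    (by rw [attachmentBound, hpd, degreeBound]) (by positivity)
  rw [Nat.card_fin] at failure
  have small := failure.trans (failure_bound_le hn hdη.ge hNq)
  rw [probReal_compl_eq_one_sub (toFinite _).measurableSet] at small
  rw [gnpProb_eq_binomialRandom_real]
  refine (sub_le_comm.1 small).trans (measureReal_mono fun G hG ↦ ?_)
  refine hG.2.localizationNumber_le hM0 (hM.trans_eq ?_) (by nlinarith) hG.1 ?_ (hK.trans_eq ?_)
  all_goals rw [Nat.card_fin]
  exact le_rfl

end SensorBound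

section Asymptotics

open Asymptotics MeasureTheory

lemma tendsto_log_natCast_atTop : Tendsto (fun n : ℕ ↦ Real.log n) atTop atTop :=
  Real.tendsto_log_atTop.comp tendsto_natCast_atTop_atTop

lemma tendsto_sub_log_atTop : Tendsto (fun x : ℝ ↦ x - Real.log x) atTop atTop :=
  (IsEquivalent.refl.sub_isLittleO Real.isLittleO_log_id_atTop).symm.tendsto_atTop tendsto_id

lemma tendsto_mul_one_add_pow_sub_one {x y : ℕ → ℝ} {k : ℕ → ℕ}
    (hx : Tendsto (fun n ↦ k n * x n) atTop (𝓝 0))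
    (hy : Tendsto (fun n ↦ y n * (k n * x n)) atTop (𝓝 0)) :
    Tendsto (fun n ↦ y n * ((1 + x n) ^ k n - 1)) atTop (𝓝 0) := by
  refine squeeze_zero_norm' ?_ (by simpa only [abs_zero, mul_zero] using hy.abs.const_mul 2)
  filter_upwards [hx.abs.eventually_le_const (by simp : |(0 : ℝ)| < 1)] with n hn
  rw [Real.norm_eq_abs, abs_mul, abs_mul (y n) (k n * x n), mul_left_comm]
  exact mul_le_mul_of_nonneg_left (abs_one_add_pow_sub_one_le hn) (abs_nonneg _)

lemma tendsto_one_sub_rpow_mul_exp {x y a : ℕ → ℝ} (hx : Tendsto x atTop (𝓝 0))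
    (hxy : Tendsto (fun n ↦ x n * y n - a n) atTop (𝓝 0))
    (hxa : Tendsto (fun n ↦ x n * a n) atTop (𝓝 0)) :
    Tendsto (fun n ↦ (1 - x n) ^ y n * Real.exp (a n)) atTop (𝓝 1) := by
  have sq_mul : Tendsto (fun n ↦ 2 * |x n * (x n * y n)|) atTop (𝓝 0) := by
    have lim := ((((hx.mul hxy).add hxa).abs).const_mul 2)
    simp only [mul_zero, add_zero, abs_zero] at lim
    exact lim.congr fun n ↦ by rw [← mul_add, sub_add_cancel]
  have small := hx.abs.eventually_le_const (by simp : |(0 : ℝ)| < 1 / 2)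
  have log_error : Tendsto (fun n ↦ (x n + Real.log (1 - x n)) * y n) atTop (𝓝 0) := by
    refine squeeze_zero_norm' ?_ sq_mul
    filter_upwards [small] with n hn
    have taylor := Real.abs_log_sub_add_sum_range_le (hn.trans_lt one_half_lt_one) 1
    simp only [Finset.sum_range_one, zero_add, pow_one, Nat.cast_zero, div_one,
      one_add_one_eq_two] at taylor
    calc ‖(x n + Real.log (1 - x n)) * y n‖ = |x n + Real.log (1 - x n)| * |y n| := abs_mul _ _
      _ ≤ (2 * |x n| ^ 2) * |y n| := by
        refine mul_le_mul_of_nonneg_right (taylor.trans ?_) (abs_nonneg _)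
        rw [div_le_iff₀ (by linarith)]
        linarith [mul_nonneg (sq_nonneg |x n|) (sub_nonneg.2 hn)]
      _ = 2 * |x n * (x n * y n)| := by rw [abs_mul, abs_mul]; ring
  have exp_lim := (Real.continuous_exp.tendsto _).comp (log_error.sub hxy)
  rw [sub_zero, Real.exp_zero] at exp_lim
  refine exp_lim.congr' ?_
  filter_upwards [small] with n hn
  rw [Function.comp_apply, Real.rpow_def_of_pos (by linarith [le_abs_self (x n)]), ← Real.exp_add]
  ring_nf

lemma tendsto_one_sub_rpow_zero {x y : ℕ → ℝ} (hx0 : ∀ᶠ n in atTop, 0 ≤ x n)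
    (hx1 : ∀ᶠ n in atTop, x n ≤ 1) (hxy : Tendsto (fun n ↦ x n * y n) atTop atTop) :
    Tendsto (fun n ↦ (1 - x n) ^ y n) atTop (𝓝 0) := by
  refine squeeze_zero' ?_ ?_ (Real.tendsto_exp_neg_atTop_nhds_zero.comp hxy)
  · filter_upwards [hx1] with n hn using Real.rpow_nonneg (sub_nonneg.2 hn) _
  · filter_upwards [hx0, hx1, hxy.eventually_gt_atTop 0] with n hn0 hn1 hn
    have hy : 0 ≤ y n := (pos_of_mul_pos_right hn hn0).le
    calc (1 - x n) ^ y n ≤ Real.exp (-x n) ^ y n :=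
        Real.rpow_le_rpow (sub_nonneg.2 hn1) (Real.one_sub_le_exp_neg _) hy
      _ = Real.exp (-(x n * y n)) := by rw [← Real.exp_mul, neg_mul]

lemma AAS.of_eventually_le {p r : ℕ → ℝ} {A : (n : ℕ) → Set (SimpleGraph (Fin n))}
    (hp : ∀ᶠ n in atTop, p n ∈ unitInterval) (hr : Tendsto r atTop (𝓝 1))
    (hA : ∀ᶠ n in atTop, r n ≤ gnpProb n (p n) (A n)) : AAS p A := by
  refine tendsto_of_tendsto_of_tendsto_of_le_of_le' hr tendsto_const_nhds hA ?_
  filter_upwards [hp] with n hn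
  exact (gnpProb_eq_binomialRandom_real n ⟨p n, hn⟩ (A n)).trans_le measureReal_le_one

lemma AAS.mono {p : ℕ → ℝ} {A A' : (n : ℕ) → Set (SimpleGraph (Fin n))} (hA : AAS p A)
    (hp : ∀ᶠ n in atTop, p n ∈ unitInterval) (hAA' : ∀ᶠ n in atTop, A n ⊆ A' n) : AAS p A' := by
  refine AAS.of_eventually_le hp hA ?_
  filter_upwards [hp, hAA'] with n hn hsub
  rw [gnpProb_eq_binomialRandom_real n ⟨p n, hn⟩, gnpProb_eq_binomialRandom_real n ⟨p n, hn⟩]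
  exact measureReal_mono hsub

/-- The parameters of the theorem: average degrees `d` with `log n ^ 3 ≪ d ≪ n` and the largest
radii `i` for which `c = d ^ i / n` is at most `3 log n`, where `c - (log d - log (log d))` tends
to `B`. -/
structure CriticalWindow (d : ℕ → ℝ) (i : ℕ → ℕ) (c : ℕ → ℝ) (B : ℝ) : Prop where
  c_eq (n : ℕ) : c n = d n ^ i n / n
  tendsto_log_cube_div : Tendsto (fun n : ℕ ↦ Real.log n ^ 3 / d n) atTop (𝓝 0)
  tendsto_div_natCast : Tendsto (fun n : ℕ ↦ d n / n) atTop (𝓝 0)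
  eventually_maximal :
    ∀ᶠ n : ℕ in atTop, c n ≤ 3 * Real.log n ∧ 3 * Real.log n < d n ^ (i n + 1) / n
  tendsto_sub : Tendsto (fun n ↦ c n - (Real.log (d n) - Real.log (Real.log (d n)))) atTop (𝓝 B)

namespace CriticalWindow

variable {d c : ℕ → ℝ} {i : ℕ → ℕ} {B : ℝ}

lemma tendsto_abs_d (h : CriticalWindow d i c B) : Tendsto (fun n ↦ |d n|) atTop atTop := by
  refine tendsto_atTop_mono' _ ?_ tendsto_log_natCast_atTop
  filter_upwards [h.tendsto_log_cube_div.abs.eventually_lt_const (by simp : |(0 : ℝ)| < 1),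
    h.eventually_maximal, tendsto_log_natCast_atTop.eventually_ge_atTop 1] with n hlog hmax hn
  have hd : d n ≠ 0 := by
    intro hd
    rw [hd, zero_pow (Nat.succ_ne_zero _), zero_div] at hmax
    linarith
  rw [abs_div, div_lt_one (abs_pos.2 hd), abs_of_nonneg (by positivity)] at hlog
  exact (le_self_pow₀ hn three_ne_zero).trans hlog.le

lemma tendsto_log_d (h : CriticalWindow d i c B) :
    Tendsto (fun n ↦ Real.log (d n)) atTop atTop := by
  simpa only [Function.comp_def, Real.log_abs] using Real.tendsto_log_atTop.comp h.tendsto_abs_d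

lemma tendsto_c (h : CriticalWindow d i c B) : Tendsto c atTop atTop := by
  simpa using h.tendsto_sub.add_atTop (tendsto_sub_log_atTop.comp h.tendsto_log_d)

lemma eventually_d_pos (h : CriticalWindow d i c B) : ∀ᶠ n in atTop, 0 < d n := by
  filter_upwards [h.eventually_maximal, h.tendsto_c.eventually_gt_atTop 0,
    tendsto_log_natCast_atTop.eventually_ge_atTop 1, eventually_gt_atTop 0] with n hmax hc hlog hn
  have hn : (0 : ℝ) < n := mod_cast hn
  have pow_pos : 0 < d n ^ i n := by rwa [h.c_eq, div_pos_iff_of_pos_right hn] at hc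
  have pow_succ_pos : 0 < d n ^ (i n + 1) :=
    (div_pos_iff_of_pos_right hn).1 (by linarith)
  rwa [pow_succ, mul_pos_iff_of_pos_left pow_pos] at pow_succ_pos

lemma tendsto_d (h : CriticalWindow d i c B) : Tendsto d atTop atTop :=
  h.tendsto_abs_d.congr' (h.eventually_d_pos.mono fun _ ↦ abs_of_pos)

lemma tendsto_c_div_log_d (h : CriticalWindow d i c B) :
    Tendsto (fun n ↦ c n / Real.log (d n)) atTop (𝓝 1) := by
  have log_log : Tendsto (fun n ↦ Real.log (Real.log (d n)) / Real.log (d n)) atTop (𝓝 0) :=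
    Real.isLittleO_log_id_atTop.tendsto_div_nhds_zero.comp h.tendsto_log_d
  have lim := ((h.tendsto_sub.div_atTop h.tendsto_log_d).add_const 1).sub log_log
  rw [zero_add, sub_zero] at lim
  refine lim.congr' ?_
  filter_upwards [h.tendsto_log_d.eventually_gt_atTop 0] with n hn
  field_simp
  ring

lemma tendsto_c_mul_exp_div_d (h : CriticalWindow d i c B) :
    Tendsto (fun n ↦ c n * Real.exp (c n) / d n) atTop (𝓝 (Real.exp B)) := by
  have lim := ((Real.continuous_exp.tendsto B).comp h.tendsto_sub).mul h.tendsto_c_div_log_d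
  rw [mul_one] at lim
  refine lim.congr' ?_
  filter_upwards [h.tendsto_log_d.eventually_gt_atTop 0, h.eventually_d_pos] with n hlog hd
  simp only [Function.comp, Real.exp_sub, Real.exp_log hd, Real.exp_log hlog]
  field_simp

lemma eventually_two_le_i (h : CriticalWindow d i c B) : ∀ᶠ n in atTop, 2 ≤ i n := by
  filter_upwards [h.tendsto_c.eventually_gt_atTop 1,
    h.tendsto_div_natCast.eventually_lt_const zero_lt_one, eventually_gt_atTop 0] with n hc hd hn
  have hn : (1 : ℝ) ≤ n := mod_cast hn
  by_contra! hi
  rw [h.c_eq] at hc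
  interval_cases i n
  · rw [pow_zero, lt_div_iff₀ (by linarith)] at hc
    linarith
  · rw [pow_one] at hc
    linarith

lemma eventually_i_mul_log_d_le (h : CriticalWindow d i c B) :
    ∀ᶠ n in atTop, i n * Real.log (d n) ≤ 2 * Real.log n := by
  have log_le : ∀ᶠ n : ℕ in atTop, 3 * Real.log n ≤ n := by
    have small := Real.isLittleO_log_id_atTop.comp_tendsto (tendsto_natCast_atTop_atTop (R := ℝ))
    filter_upwards [small.bound (by norm_num : (0 : ℝ) < 1 / 3)] with n hn
    simp only [Function.comp_apply, id, Real.norm_eq_abs, Nat.abs_cast] at hn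
    linarith [le_abs_self (Real.log n)]
  filter_upwards [h.eventually_d_pos, h.eventually_maximal, log_le, eventually_gt_atTop 0]
    with n hd hmax hlog hn
  have hn : (0 : ℝ) < n := mod_cast hn
  have pow_le : d n ^ i n ≤ (n : ℝ) ^ 2 := by
    rw [h.c_eq, div_le_iff₀ hn] at hmax
    nlinarith
  simpa only [Real.log_pow, Nat.cast_ofNat] using Real.log_le_log (by positivity) pow_le

lemma eventually_c_le_two_mul_log_d (h : CriticalWindow d i c B) :
    ∀ᶠ n in atTop, c n ≤ 2 * Real.log (d n) := by
  filter_upwards [h.tendsto_c_div_log_d.eventually_lt_const one_lt_two,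
    h.tendsto_log_d.eventually_gt_atTop 0] with n hn hlog using ((div_lt_iff₀ hlog).1 hn).le

lemma tendsto_zero_of_c_mul (h : CriticalWindow d i c B) {x : ℕ → ℝ}
    (hx : Tendsto (fun n ↦ c n * x n) atTop (𝓝 0)) : Tendsto x atTop (𝓝 0) := by
  refine (hx.div_atTop h.tendsto_c).congr' ?_
  filter_upwards [h.tendsto_c.eventually_ne_atTop 0] with n hn using mul_div_cancel_left₀ _ hn

lemma tendsto_c_sq_div_d (h : CriticalWindow d i c B) :
    Tendsto (fun n ↦ c n * (c n / d n)) atTop (𝓝 0) := by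
  refine squeeze_zero' ?_ ?_ (by simpa using h.tendsto_log_cube_div.const_mul 9)
  · filter_upwards [h.eventually_d_pos, h.tendsto_c.eventually_ge_atTop 0] with n hd hc
    positivity
  · filter_upwards [h.eventually_d_pos, h.tendsto_c.eventually_ge_atTop 0, h.eventually_maximal,
      tendsto_log_natCast_atTop.eventually_ge_atTop 1] with n hd hc hmax hlog
    rw [← mul_div_assoc, ← mul_div_assoc]
    refine div_le_div_of_nonneg_right ?_ hd.le
    calc c n * c n ≤ (3 * Real.log n) * (3 * Real.log n) := by gcongr <;> exact hmax.1
      _ = 9 * Real.log n ^ 2 := by ring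
      _ ≤ 9 * Real.log n ^ 3 := by gcongr; omega

lemma tendsto_c_div_d (h : CriticalWindow d i c B) :
    Tendsto (fun n ↦ c n / d n) atTop (𝓝 0) :=
  h.tendsto_zero_of_c_mul h.tendsto_c_sq_div_d

lemma eventually_sq_le_c_mul (h : CriticalWindow d i c B) :
    ∀ᶠ n : ℕ in atTop, d n ^ 2 ≤ c n * n := by
  filter_upwards [h.tendsto_d.eventually_ge_atTop 1, h.eventually_two_le_i, eventually_ne_atTop 0]
    with n hd hi hn
  rw [h.c_eq, div_mul_cancel₀ _ (mod_cast hn)]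
  exact pow_le_pow_right₀ hd hi

lemma tendsto_div_natCast_mul_c (h : CriticalWindow d i c B) :
    Tendsto (fun n ↦ d n / n * c n) atTop (𝓝 0) := by
  refine squeeze_zero' ?_ ?_ h.tendsto_c_sq_div_d
  · filter_upwards [h.eventually_d_pos, h.tendsto_c.eventually_ge_atTop 0] with n hd hc
    positivity
  · filter_upwards [h.eventually_d_pos, h.tendsto_c.eventually_ge_atTop 0,
      h.eventually_sq_le_c_mul, eventually_gt_atTop 0] with n hd hc hsq hn
    rw [mul_comm]
    refine mul_le_mul_of_nonneg_left ?_ hc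
    rwa [div_le_div_iff₀ (mod_cast hn) hd, ← sq]

lemma tendsto_growthDeviation_mul_log (h : CriticalWindow d i c B) :
    Tendsto (fun n ↦ growthDeviation n (d n) * Real.log n) atTop (𝓝 0) := by
  have lim := (Real.continuous_sqrt.tendsto _).comp (h.tendsto_log_cube_div.const_mul 12)
  rw [mul_zero, Real.sqrt_zero] at lim
  refine lim.congr' ?_
  filter_upwards [h.eventually_d_pos, tendsto_log_natCast_atTop.eventually_ge_atTop 0]
    with n hd hlog
  rw [growthDeviation, Function.comp_apply]
  nth_rewrite 3 [← Real.sqrt_sq hlog]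
  rw [← Real.sqrt_mul (by positivity)]
  ring_nf

lemma tendsto_growthDeviation (h : CriticalWindow d i c B) :
    Tendsto (fun n ↦ growthDeviation n (d n)) atTop (𝓝 0) := by
  refine (h.tendsto_growthDeviation_mul_log.div_atTop tendsto_log_natCast_atTop).congr' ?_
  filter_upwards [tendsto_log_natCast_atTop.eventually_ne_atTop 0] with n hn
    using mul_div_cancel_right₀ _ hn

lemma eventually_mul_growthDeviation_sq (h : CriticalWindow d i c B) :
    ∀ᶠ n : ℕ in atTop, d n * growthDeviation n (d n) ^ 2 = 12 * Real.log n := by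
  filter_upwards [h.eventually_d_pos, tendsto_log_natCast_atTop.eventually_ge_atTop 0]
    with n hd hlog
  have ratio_nonneg : 0 ≤ 12 * Real.log n / d n :=
    div_nonneg (mul_nonneg (by norm_num) hlog) hd.le
  rw [growthDeviation, Real.sq_sqrt ratio_nonneg, mul_div_cancel₀ _ hd.ne']

lemma tendsto_c_mul_one_add_pow_sub_one (h : CriticalWindow d i c B) {k : ℕ → ℕ}
    (hk : ∀ᶠ n in atTop, k n ≤ i n) (a : ℝ) :
    Tendsto (fun n ↦ c n * ((1 + a * growthDeviation n (d n)) ^ k n - 1)) atTop (𝓝 0) := by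
  have lim : Tendsto (fun n ↦ c n * (k n * (a * growthDeviation n (d n)))) atTop (𝓝 0) := by
    refine squeeze_zero_norm' ?_
      (by simpa using (h.tendsto_growthDeviation_mul_log.const_mul (4 * |a|)))
    filter_upwards [hk, h.tendsto_c.eventually_ge_atTop 0, h.eventually_c_le_two_mul_log_d,
      h.eventually_i_mul_log_d_le] with n hki hc hcd hi
    have hη : 0 ≤ growthDeviation n (d n) := Real.sqrt_nonneg _
    have hki : (k n : ℝ) ≤ i n := mod_cast hki
    calc ‖c n * (k n * (a * growthDeviation n (d n)))‖
        = c n * k n * (|a| * growthDeviation n (d n)) := by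
          rw [Real.norm_eq_abs, abs_mul, abs_mul, abs_mul, abs_of_nonneg hc, Nat.abs_cast,
            abs_of_nonneg hη]
          ring
      _ ≤ 2 * Real.log (d n) * i n * (|a| * growthDeviation n (d n)) := by gcongr; linarith
      _ ≤ 4 * Real.log n * (|a| * growthDeviation n (d n)) := by gcongr ?_ * _; linarith
      _ = 4 * |a| * (growthDeviation n (d n) * Real.log n) := by ring
  exact tendsto_mul_one_add_pow_sub_one (h.tendsto_zero_of_c_mul lim) lim

lemma tendsto_one_add_pow (h : CriticalWindow d i c B) {k : ℕ → ℕ}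
    (hk : ∀ᶠ n in atTop, k n ≤ i n) (a : ℝ) :
    Tendsto (fun n ↦ (1 + a * growthDeviation n (d n)) ^ k n) atTop (𝓝 1) := by
  simpa using (h.tendsto_zero_of_c_mul (h.tendsto_c_mul_one_add_pow_sub_one hk a)).add_const 1

lemma eventually_mul_pow_eq_c (h : CriticalWindow d i c B) :
    ∀ᶠ n in atTop, d n / n * d n ^ (i n - 2 + 1) = c n := by
  filter_upwards [h.eventually_two_le_i] with n hi
  rw [h.c_eq, div_mul_eq_mul_div, ← pow_succ', show i n - 2 + 1 + 1 = i n by omega]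

lemma tendsto_mul_degreeBound_pow_sub_c (h : CriticalWindow d i c B) :
    Tendsto (fun n ↦ d n / n * degreeBound n (d n) ^ (i n - 2 + 1) - c n) atTop (𝓝 0) := by
  have hk : ∀ᶠ n in atTop, i n - 2 + 1 ≤ i n := h.eventually_two_le_i.mono fun n hi ↦ by omega
  refine (h.tendsto_c_mul_one_add_pow_sub_one hk 2).congr' ?_
  filter_upwards [h.eventually_mul_pow_eq_c] with n hn
  rw [degreeBound, mul_pow, ← hn]
  ring

lemma tendsto_sphereBound_div_pow (h : CriticalWindow d i c B) :
    Tendsto (fun n ↦ sphereBound n (d n) (i n - 2) / d n ^ (i n - 2 + 1)) atTop (𝓝 1) := by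
  have hk : ∀ᶠ n in atTop, i n - 2 + 1 ≤ i n := h.eventually_two_le_i.mono fun n hi ↦ by omega
  have hk' : ∀ᶠ n in atTop, i n - 2 ≤ i n := .of_forall fun n ↦ Nat.sub_le _ _
  have lim := (((h.tendsto_one_add_pow hk (-2)).const_mul 2).sub (h.tendsto_one_add_pow hk 2)).sub
    ((h.tendsto_one_add_pow hk' 2).div_atTop h.tendsto_d)
  rw [show (2 : ℝ) * 1 - 1 - 0 = 1 by norm_num] at lim
  refine lim.congr' ?_
  filter_upwards [h.eventually_d_pos] with n hd
  rw [sphereBound, degreeBound, mul_pow, mul_pow, mul_pow]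
  field_simp
  ring

lemma tendsto_mul_sphereBound (h : CriticalWindow d i c B) :
    Tendsto (fun n ↦ d n / n * sphereBound n (d n) (i n - 2)) atTop atTop := by
  refine (h.tendsto_c.atTop_mul_pos one_pos h.tendsto_sphereBound_div_pow).congr' ?_
  filter_upwards [h.eventually_mul_pow_eq_c, h.eventually_d_pos] with n hn hd
  rw [← hn]
  field_simp

lemma tendsto_sphereBound_mul_exp_div (h : CriticalWindow d i c B) :
    Tendsto (fun n ↦ sphereBound n (d n) (i n - 2) * Real.exp (c n) / n) atTop
      (𝓝 (Real.exp B)) := by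
  have lim := h.tendsto_sphereBound_div_pow.mul h.tendsto_c_mul_exp_div_d
  rw [one_mul] at lim
  refine lim.congr' ?_
  filter_upwards [h.eventually_mul_pow_eq_c, h.eventually_d_pos] with n hn hd
  nth_rewrite 1 [← hn]
  field_simp

lemma tendsto_attachmentBound_mul_exp (h : CriticalWindow d i c B) :
    Tendsto (fun n ↦ attachmentBound n (d n) (i n - 2) * Real.exp (c n)) atTop (𝓝 1) := by
  have hp0 : ∀ᶠ n : ℕ in atTop, 0 ≤ d n / n := h.eventually_d_pos.mono fun n hd ↦ by positivity
  have miss := tendsto_one_sub_rpow_zero hp0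
    (h.tendsto_div_natCast.eventually_le_const one_pos) h.tendsto_mul_sphereBound
  have avoid := tendsto_one_sub_rpow_mul_exp h.tendsto_div_natCast
    h.tendsto_mul_degreeBound_pow_sub_c h.tendsto_div_natCast_mul_c
  simpa [attachmentBound, mul_assoc] using (miss.const_sub 1).mul avoid

lemma tendsto_unexploredBound_div (h : CriticalWindow d i c B) :
    Tendsto (fun n ↦ unexploredBound n (d n) (i n - 2) / n) atTop (𝓝 1) := by
  have lim := (((h.tendsto_mul_degreeBound_pow_sub_c.div_atTop h.tendsto_d).add
    h.tendsto_c_div_d).const_mul 2).const_sub 1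
  rw [add_zero, mul_zero, sub_zero] at lim
  refine lim.congr' ?_
  filter_upwards [h.eventually_d_pos, eventually_ne_atTop 0] with n hd hn
  have hn : (n : ℝ) ≠ 0 := mod_cast hn
  rw [unexploredBound]
  field_simp
  ring

lemma tendsto_unexplored_mul_attachment (h : CriticalWindow d i c B) :
    Tendsto (fun n ↦ unexploredBound n (d n) (i n - 2) * attachmentBound n (d n) (i n - 2)
      * Real.exp (c n) / n) atTop (𝓝 1) := by
  have lim := h.tendsto_unexploredBound_div.mul h.tendsto_attachmentBound_mul_exp
  rw [one_mul] at lim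
  exact lim.congr fun n ↦ by ring

lemma tendsto_distinguishingBound (h : CriticalWindow d i c B) :
    Tendsto (fun n ↦ distinguishingBound n (d n) (i n - 2) * Real.exp (c n) / n) atTop
      (𝓝 (2 * (Real.exp B + 1))) := by
  have lim := (h.tendsto_sphereBound_mul_exp_div.add
    ((h.tendsto_growthDeviation_mul_log.const_sub 1).mul
      h.tendsto_unexplored_mul_attachment)).const_mul 2
  rw [sub_zero, one_mul] at lim
  refine lim.congr fun n ↦ ?_
  rw [distinguishingBound]
  ring

lemma tendsto_log_degreeBound (h : CriticalWindow d i c B) :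
    Tendsto (fun n ↦ Real.log (2 * degreeBound n (d n) ^ 2) / Real.log (d n)) atTop (𝓝 2) := by
  have factor := (h.tendsto_growthDeviation.const_mul 2).const_add 1
  rw [mul_zero, add_zero] at factor
  have lim := ((((factor.log one_ne_zero).const_mul 2).const_add (Real.log 2)).div_atTop
    h.tendsto_log_d).add_const 2
  rw [zero_add] at lim
  refine lim.congr' ?_
  filter_upwards [h.tendsto_log_d.eventually_ne_atTop 0, h.eventually_d_pos] with n hlog hd
  have hη : 0 ≤ growthDeviation n (d n) := Real.sqrt_nonneg _
  rw [degreeBound, Real.log_mul two_ne_zero (by positivity), Real.log_pow,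
    Real.log_mul (by positivity) hd.ne']
  field_simp
  push_cast
  ring

lemma tendsto_sensorBound_div (h : CriticalWindow d i c B) :
    Tendsto (fun n ↦ sensorBound n (d n) (i n - 2)
      / (Real.log (d n) * (Real.exp (c n) / (Real.exp B + 1)))) atTop (𝓝 1) := by
  have scale : Tendsto (fun n ↦ Real.log (d n) * (Real.exp (c n) / (Real.exp B + 1)))
      atTop atTop :=
    h.tendsto_log_d.atTop_mul_atTop₀
      ((Real.tendsto_exp_atTop.comp h.tendsto_c).atTop_div_const (by positivity))
  have lim := ((h.tendsto_log_degreeBound.mul_const (Real.exp B + 1)).div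
    h.tendsto_distinguishingBound (by positivity)).add (tendsto_inv_atTop_zero.comp scale)
  rw [div_self (by positivity), add_zero] at lim
  refine lim.congr fun n ↦ ?_
  simp only [Pi.div_apply, Function.comp_apply, sensorBound, add_div, one_div]
  congr 1
  field_simp

lemma tendsto_distinguishingBound_div (h : CriticalWindow d i c B) :
    Tendsto (fun n ↦ distinguishingBound n (d n) (i n - 2) / n) atTop (𝓝 0) := by
  refine (h.tendsto_distinguishingBound.div_atTop
    (Real.tendsto_exp_atTop.comp h.tendsto_c)).congr fun n ↦ ?_
  rw [Function.comp_apply]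
  field_simp

lemma tendsto_sensorBound_div_natCast (h : CriticalWindow d i c B) :
    Tendsto (fun n ↦ sensorBound n (d n) (i n - 2) / n) atTop (𝓝 0) := by
  have lim := ((h.tendsto_sensorBound_div.div_const (Real.exp B + 1)).mul
    (h.tendsto_c_div_log_d.inv₀ one_ne_zero)).mul
    (h.tendsto_c_mul_exp_div_d.mul h.tendsto_div_natCast)
  rw [mul_zero, mul_zero] at lim
  refine lim.congr' ?_
  filter_upwards [h.eventually_d_pos, h.tendsto_log_d.eventually_ne_atTop 0,
    h.tendsto_c.eventually_ne_atTop 0] with n hd hlog hc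
  have : Real.exp B + 1 ≠ 0 := by positivity
  field_simp

lemma eventually_radius_le (h : CriticalWindow d i c B) :
    ∀ᶠ n : ℕ in atTop, d n / n * (2 * degreeBound n (d n) ^ (i n - 2))
      ≤ growthDeviation n (d n) / 2 := by
  filter_upwards [h.eventually_d_pos, h.eventually_mul_growthDeviation_sq, h.eventually_maximal,
    h.tendsto_growthDeviation.eventually_le_const (by norm_num : (0 : ℝ) < 1 / 2),
    h.tendsto_mul_degreeBound_pow_sub_c.eventually_le_const one_pos,
    h.tendsto_c.eventually_ge_atTop 1] with n hd hdη hmax hη hL hc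
  have hη0 : 0 ≤ growthDeviation n (d n) := Real.sqrt_nonneg _
  have hdL : d n ≤ degreeBound n (d n) := le_mul_of_one_le_left hd.le (by linarith)
  have hL0 : 0 ≤ degreeBound n (d n) := hd.le.trans hdL
  refine le_of_mul_le_mul_right ?_ hd
  calc d n / n * (2 * degreeBound n (d n) ^ (i n - 2)) * d n
      ≤ d n / n * (2 * degreeBound n (d n) ^ (i n - 2)) * degreeBound n (d n) := by gcongr
    _ = 2 * (d n / n * degreeBound n (d n) ^ (i n - 2 + 1)) := by ring
    _ ≤ d n * growthDeviation n (d n) ^ 2 := by linarith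
    _ ≤ growthDeviation n (d n) / 2 * d n := by
      linarith [mul_nonneg (mul_nonneg hd.le hη0) (sub_nonneg.2 hη)]

lemma eventually_three_mul_log_le (h : CriticalWindow d i c B) :
    ∀ᶠ n : ℕ in atTop, 3 * Real.log n
      ≤ unexploredBound n (d n) (i n - 2) * attachmentBound n (d n) (i n - 2)
        * (growthDeviation n (d n) * Real.log n) ^ 2 / 2 := by
  have lim := h.tendsto_unexplored_mul_attachment.div h.tendsto_c_mul_exp_div_d (Real.exp_ne_zero B)
  have grow := lim.pos_mul_atTop (by positivity)
    ((tendsto_pow_atTop two_ne_zero).comp tendsto_log_natCast_atTop)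
  filter_upwards [grow.eventually_ge_atTop 1, h.eventually_sq_le_c_mul, h.eventually_d_pos,
    h.eventually_mul_growthDeviation_sq, tendsto_log_natCast_atTop.eventually_ge_atTop 1,
    h.tendsto_c.eventually_gt_atTop 0,
    tendsto_natCast_atTop_atTop.eventually_gt_atTop (0 : ℝ)] with n hgrow hsq hd hdη hlog hc hn
  set s := unexploredBound n (d n) (i n - 2) * attachmentBound n (d n) (i n - 2)
  have hs : d n ≤ s * Real.log n ^ 2 := by
    simp only [Pi.div_apply, Function.comp_apply] at hgrow
    refine le_of_mul_le_mul_left ?_ hd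
    calc d n * d n ≤ c n * n := by rwa [← sq]
      _ ≤ c n * n * (s * Real.exp (c n) / n / (c n * Real.exp (c n) / d n) * Real.log n ^ 2) :=
        le_mul_of_one_le_right (by positivity) hgrow
      _ = d n * (s * Real.log n ^ 2) := by field_simp
  refine le_of_mul_le_mul_left ?_ hd
  calc d n * (3 * Real.log n) ≤ s * Real.log n ^ 2 * (6 * Real.log n) :=
        mul_le_mul hs (by linarith) (by linarith) (hd.le.trans hs)
    _ = s * Real.log n ^ 2 * (d n * growthDeviation n (d n) ^ 2) / 2 := by rw [hdη]; ring
    _ = d n * (s * (growthDeviation n (d n) * Real.log n) ^ 2 / 2) := by ring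

lemma eventually_le_gnpProb_localizationNumber (h : CriticalWindow d i c B) {p : ℕ → ℝ}
    (hp : ∀ᶠ n in atTop, d n = p n * n) :
    ∀ᶠ n : ℕ in atTop, 1 - 4 / n
      ≤ gnpProb n (p n) {G | localizationNumber G ≤ sensorBound n (d n) (i n - 2)} := by
  have half_pos : (0 : ℝ) < 1 / 2 := by norm_num
  have bounds : ∀ᶠ n : ℕ in atTop, 0 ≤ unexploredBound n (d n) (i n - 2) ∧
      0 ≤ attachmentBound n (d n) (i n - 2) ∧ 0 < distinguishingBound n (d n) (i n - 2) ∧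
      distinguishingBound n (d n) (i n - 2) ≤ n ∧ sensorBound n (d n) (i n - 2) ≤ n := by
    filter_upwards [h.tendsto_unexploredBound_div.eventually_const_lt one_pos,
      h.tendsto_attachmentBound_mul_exp.eventually_const_lt one_pos,
      h.tendsto_distinguishingBound.eventually_const_lt (by positivity),
      h.tendsto_distinguishingBound_div.eventually_le_const one_pos,
      h.tendsto_sensorBound_div_natCast.eventually_le_const one_pos, eventually_gt_atTop 0]
      with n hN hq hM0 hM hK hn
    have hn : (0 : ℝ) < n := mod_cast hn
    exact ⟨((div_pos_iff_of_pos_right hn).1 hN).le,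
      ((pos_iff_pos_of_mul_pos hq).2 (Real.exp_pos _)).le,
      (pos_iff_pos_of_mul_pos ((div_pos_iff_of_pos_right hn).1 hM0)).2 (Real.exp_pos _),
      (div_le_one hn).1 hM, (div_le_one hn).1 hK⟩
  filter_upwards [hp, bounds, h.tendsto_d.eventually_ge_atTop 1,
    h.tendsto_div_natCast.eventually_lt_const one_pos,
    h.tendsto_growthDeviation.eventually_le_const half_pos, h.eventually_mul_growthDeviation_sq,
    h.eventually_radius_le, h.eventually_three_mul_log_le,
    tendsto_log_natCast_atTop.eventually_ge_atTop 1, eventually_gt_atTop 0]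
    with n hp ⟨hN, hq, hM0, hM, hK⟩ hd hp1 hη hdη hr hNq hlog hn
  have hη0 : 0 ≤ growthDeviation n (d n) := Real.sqrt_nonneg _
  have hpd : p n = d n / n := by rw [hp, mul_div_cancel_right₀ _ (mod_cast hn.ne')]
  rw [hpd]
  refine gnpProb_localizationNumber_le_sensorBound hn (by positivity) hp1 (by rw [← hpd, hp]) hd hη
    ?_ hr hN hq hNq hM0 hM hK
  nlinarith

lemma eventually_mem_unitInterval (h : CriticalWindow d i c B) {p : ℕ → ℝ}
    (hp : ∀ᶠ n in atTop, d n = p n * n) : ∀ᶠ n in atTop, p n ∈ unitInterval := by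
  filter_upwards [hp, h.eventually_d_pos, h.tendsto_div_natCast.eventually_le_const one_pos,
    eventually_gt_atTop 0] with n hp hd hp1 hn
  have hpd : p n = d n / n := by rw [hp, mul_div_cancel_right₀ _ (mod_cast hn.ne')]
  rw [hpd]
  exact ⟨by positivity, hp1⟩

theorem exists_AAS_localizationNumber_le (h : CriticalWindow d i c B) {p : ℕ → ℝ}
    (hp : ∀ᶠ n in atTop, d n = p n * n) :
    ∃ ε : ℕ → ℝ, Tendsto ε atTop (𝓝 0) ∧ AAS p fun n ↦ {G | localizationNumber G
      ≤ (1 + ε n) * (Real.log (d n) * (Real.exp (c n) / (Real.exp B + 1)))} := by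
  refine ⟨fun n ↦ sensorBound n (d n) (i n - 2)
    / (Real.log (d n) * (Real.exp (c n) / (Real.exp B + 1))) - 1,
    by simpa only [sub_self] using h.tendsto_sensorBound_div.sub_const 1, ?_⟩
  have lower : Tendsto (fun n : ℕ ↦ 1 - 4 / (n : ℝ)) atTop (𝓝 1) := by
    simpa only [sub_zero] using (tendsto_const_div_atTop_nhds_zero_nat (4 : ℝ)).const_sub 1
  refine AAS.of_eventually_le (h.eventually_mem_unitInterval hp) lower ?_
  filter_upwards [h.eventually_le_gnpProb_localizationNumber hp,
    h.tendsto_log_d.eventually_gt_atTop 0] with n hn hlog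
  rwa [add_sub_cancel, div_mul_cancel₀ _ (by positivity)]

lemma tendsto_ratio (h : CriticalWindow d i c B) :
    Tendsto (fun n ↦ Real.exp (c n) / (Real.exp B + 1)
      / (n / (d n ^ (i n - 1) * (1 + Real.exp (-B))))) atTop (𝓝 1) := by
  have lim := h.tendsto_c_mul_exp_div_d.mul_const (Real.exp (-B))
  rw [← Real.exp_add, add_neg_cancel, Real.exp_zero] at lim
  refine lim.congr' ?_
  filter_upwards [h.eventually_mul_pow_eq_c, h.eventually_d_pos, h.eventually_two_le_i,
    eventually_gt_atTop 0] with n hc hd hi hn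
  rw [show i n - 1 = i n - 2 + 1 by omega, Real.exp_neg]
  nth_rewrite 1 [← hc]
  have := Real.exp_pos B
  field_simp

end CriticalWindow

end Asymptotics

theorem stmt15_localization_upper_bound_critical_window
    (p d : ℕ → ℝ) (i : ℕ → ℕ) (c : ℕ → ℝ)
    (hd : ∀ n, d n = p n * n)
    (hc : ∀ n, c n = d n ^ i n / n)
    (hlog3 : Filter.Tendsto (fun n : ℕ => (Real.log n) ^ 3 / d n) Filter.atTop (nhds 0))
    (hdn : Filter.Tendsto (fun n : ℕ => d n / n) Filter.atTop (nhds 0))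
    (himax : ∀ᶠ n : ℕ in Filter.atTop,
      c n ≤ 3 * Real.log n ∧ 3 * Real.log n < d n ^ (i n + 1) / n)
    (B : ℝ)
    (hcB : Filter.Tendsto
      (fun n : ℕ => c n - (Real.log (d n) - Real.log (Real.log (d n))))
      Filter.atTop (nhds B)) :
    (∃ ε : ℕ → ℝ, Filter.Tendsto ε Filter.atTop (nhds 0) ∧
      AAS p (fun n : ℕ =>
        {G : SimpleGraph (Fin n) |
          (localizationNumber G : ℝ)
            ≤ (1 + ε n) * (Real.log (d n) + 2 * Real.log (Real.log n))
                * (Real.exp (c n) / (Real.exp B + 1))})) ∧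
    Filter.Tendsto
      (fun n : ℕ =>
        ((Real.log (d n) + 2 * Real.log (Real.log n))
            * (Real.exp (c n) / (Real.exp B + 1)))
          / ((Real.log (d n) + 2 * Real.log (Real.log n))
              * n / (d n ^ (i n - 1) * (1 + Real.exp (-B)))))
      Filter.atTop (nhds 1) := by
  have h : CriticalWindow d i c B := ⟨hc, hlog3, hdn, himax, hcB⟩
  obtain ⟨ε, hε, sharp⟩ := h.exists_AAS_localizationNumber_le (.of_forall hd)
  have log_log_nonneg : ∀ᶠ n : ℕ in atTop, 0 ≤ Real.log (Real.log n) :=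
    (tendsto_log_natCast_atTop.eventually_ge_atTop 1).mono fun _ ↦ Real.log_nonneg
  have log_d_pos := h.tendsto_log_d.eventually_gt_atTop 0
  refine ⟨⟨ε, hε, sharp.mono (h.eventually_mem_unitInterval (.of_forall hd)) ?_⟩, ?_⟩
  · filter_upwards [hε.eventually_const_le neg_one_lt_zero, log_log_nonneg] with n hεn hlog G hG
    rw [Set.mem_ofPred_eq, ← mul_assoc] at hG
    refine hG.trans ?_
    gcongr <;> linarith
  · refine h.tendsto_ratio.congr' ?_
    filter_upwards [log_d_pos, log_log_nonneg] with n hd hlog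
    rw [mul_div_assoc _ (n : ℝ), mul_div_mul_left _ _ (by positivity)]
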